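/- Let f : ℝ² → ℝ² be a C^∞ map with f(0)=0 of the form f = (x, y³ + Σ_{i+j≥4} a_{ij} x^i y^j). Then: (i) a_{31} ≠ 0 if and only if f is A-equivalent to (x,y) ↦ (x, y³ + x³y) (goose); (ii) (a_{31} = 0 and a_{41} − (1/3)a_{22}² ≠ 0) if and only if f is A-equivalent to (x,y) ↦ (x, y³ + εx⁴y) for some ε ∈ {1,−1} (ugly goose); (iii) (a_{31} = 0, a_{41} − (1/3)a_{22}² = 0, and a_{51} − (2/3)a_{32}a_{22} + (1/3)a_{13}a_{22}² ≠ 0) if and only if f is A-equivalent to (x,y) ↦ (x, y³ + εx⁵y) for some ε ∈ {1,−1}. -/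

import Mathlib

open Filter Topology

noncomputable section

/-- Directional derivative of a scalar function. -/
def dop (v : ℝ × ℝ) (g : ℝ × ℝ → ℝ) : ℝ × ℝ → ℝ :=
  fun p => fderiv ℝ g p v

/-- Partial derivative operator in the first coordinate. -/
def pdx : (ℝ × ℝ → ℝ) → ℝ × ℝ → ℝ := dop (1, 0)

/-- Partial derivative operator in the second coordinate. -/
def pdy : (ℝ × ℝ → ℝ) → ℝ × ℝ → ℝ := dop (0, 1)

/-- Taylor coefficient `a_{ij} = ∂_x^i ∂_y^j g(0,0) / (i! j!)` of `g` at the origin. -/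
def tcoeff (g : ℝ × ℝ → ℝ) (i j : ℕ) : ℝ :=
  (pdx^[i] (pdy^[j] g)) 0 / (Nat.factorial i * Nat.factorial j)

/-- The Jacobian determinant `λ_f` of a map `f : ℝ² → ℝ²`. -/
def jacDet (f : ℝ × ℝ → ℝ × ℝ) (p : ℝ × ℝ) : ℝ :=
  (fderiv ℝ f p (1, 0)).1 * (fderiv ℝ f p (0, 1)).2 -
    (fderiv ℝ f p (1, 0)).2 * (fderiv ℝ f p (0, 1)).1

/-- `f` has corank one at `0` : the derivative of `f` at `0` has rank one. -/
def CorankOne (f : ℝ × ℝ → ℝ × ℝ) : Prop :=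
  LinearMap.rank ((fderiv ℝ f 0).toLinearMap) = 1

/-- `η` is a null vector field for `f` near `0`. -/
def IsNullVF (f η : ℝ × ℝ → ℝ × ℝ) : Prop :=
  η 0 ≠ 0 ∧ ∃ U ∈ 𝓝 (0 : ℝ × ℝ),
    ContDiffOn ℝ (⊤ : ℕ∞) η U ∧ ∀ p ∈ U, jacDet f p = 0 → fderiv ℝ f p (η p) = 0

/-- The derivative `(ηg)(p) = Dg(p)(η(p))` of `g` along the vector field `η`. -/
def etaD (η : ℝ × ℝ → ℝ × ℝ) (g : ℝ × ℝ → ℝ) : ℝ × ℝ → ℝ :=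
  fun p => fderiv ℝ g p (η p)

/-- The iterated derivative `η^k g` along the vector field `η`. -/
def etaIter (η : ℝ × ℝ → ℝ × ℝ) : ℕ → (ℝ × ℝ → ℝ) → ℝ × ℝ → ℝ
  | 0, g => g
  | k + 1, g => etaD η (etaIter η k g)

/-- The Hessian matrix of second partial derivatives of `g` at `0`. -/
def hess (g : ℝ × ℝ → ℝ) : Matrix (Fin 2) (Fin 2) ℝ :=
  !![pdx (pdx g) 0, pdx (pdy g) 0; pdy (pdx g) 0, pdy (pdy g) 0]

/-- `A^r`-equivalence of the `r`-jets at `0` of two map-germs `(ℝ²,0) → (ℝ²,0)`. -/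
def JetEquiv (r : ℕ) (f g : ℝ × ℝ → ℝ × ℝ) : Prop :=
  ∃ φ ψ : ℝ × ℝ → ℝ × ℝ,
    ContDiff ℝ (⊤ : ℕ∞) φ ∧ ContDiff ℝ (⊤ : ℕ∞) ψ ∧ φ 0 = 0 ∧ ψ 0 = 0 ∧
    Function.Bijective (⇑(fderiv ℝ φ 0)) ∧ Function.Bijective (⇑(fderiv ℝ ψ 0)) ∧
    ∀ i ≤ r, iteratedFDeriv ℝ i (ψ ∘ f ∘ φ) 0 = iteratedFDeriv ℝ i g 0

/-- `A`-equivalence of two map-germs `(ℝ²,0) → (ℝ²,0)`. -/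
def AEquiv (f g : ℝ × ℝ → ℝ × ℝ) : Prop :=
  ∃ φ ψ : ℝ × ℝ → ℝ × ℝ,
    ContDiff ℝ (⊤ : ℕ∞) φ ∧ ContDiff ℝ (⊤ : ℕ∞) ψ ∧ φ 0 = 0 ∧ ψ 0 = 0 ∧
    Function.Bijective (⇑(fderiv ℝ φ 0)) ∧ Function.Bijective (⇑(fderiv ℝ ψ 0)) ∧
    ∀ᶠ p in 𝓝 (0 : ℝ × ℝ), ψ (f (φ p)) = g p

/-- `f` has the form `(x, g(x,y))` where `g` is `C^∞` and the Taylor coefficients of `g`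
of total degree `< N` at the origin are prescribed by `P`. -/
def HasForm (f : ℝ × ℝ → ℝ × ℝ) (g : ℝ × ℝ → ℝ) (N : ℕ) (P : ℕ → ℕ → ℝ) : Prop :=
  ContDiff ℝ (⊤ : ℕ∞) g ∧ (∀ p, f p = (p.1, g p)) ∧
    ∀ i j, i + j < N → tcoeff g i j = P i j

section
open Filter Topology
noncomputable section

section IFT
variable {E F : Type} [NormedAddCommGroup E] [NormedSpace ℝ E] [FiniteDimensional ℝ E]
  [NormedAddCommGroup F] [NormedSpace ℝ F] [FiniteDimensional ℝ F]

lemma gse_global_ext (f : E → F) (a : E) (s : Set E) (hs : s ∈ 𝓝 a)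
    (hf : ∀ x ∈ s, ContDiffAt ℝ (⊤ : ℕ∞) f x) :
    ∃ f' : E → F, ContDiff ℝ (⊤ : ℕ∞) f' ∧ f' =ᶠ[𝓝 a] f := by
  obtain ⟨r, hr, hrs⟩ := Metric.nhds_basis_closedBall.mem_iff.1 hs
  let χ : ContDiffBump a := ⟨r / 2, r, by positivity, by linarith⟩
  refine ⟨fun x => χ x • f x, ?_, ?_⟩
  · rw [contDiff_iff_contDiffAt]
    intro x
    by_cases hx : x ∈ tsupport (fun x => χ x • f x)
    swap
    · have h0 := notMem_tsupport_iff_eventuallyEq.1 hx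
      exact (contDiffAt_const (c := (0 : F))).congr_of_eventuallyEq h0
    have hx' : x ∈ tsupport χ := closure_mono (Function.support_smul_subset_left _ _) hx
    rw [χ.tsupport_eq] at hx'
    exact (χ.contDiffAt).smul (hf x (hrs hx'))
  · filter_upwards [χ.eventuallyEq_one] with x hx
    simp [hx]

lemma gse_inv (Φ : E → F) (a : E) (hΦ : ContDiff ℝ (⊤ : ℕ∞) Φ)
    (hb : Function.Bijective (fderiv ℝ Φ a)) :
    ∃ Θ : F → E, ContDiff ℝ (⊤ : ℕ∞) Θ ∧ Θ (Φ a) = a ∧ (∀ᶠ p in 𝓝 (Φ a), Φ (Θ p) = p) ∧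
      (∀ᶠ p in 𝓝 a, Θ (Φ p) = p) ∧ Function.Bijective (fderiv ℝ Θ (Φ a)) := by
  have hn : ((⊤ : ℕ∞) : WithTop ℕ∞) ≠ 0 := by simp
  let L : E ≃L[ℝ] F := (LinearEquiv.ofBijective (fderiv ℝ Φ a).toLinearMap hb).toContinuousLinearEquiv
  have hL : (L : E →L[ℝ] F) = fderiv ℝ Φ a := by ext x; rfl
  have hd : ∀ x, HasFDerivAt Φ (fderiv ℝ Φ x) x := fun x =>
    (hΦ.differentiable hn x).hasFDerivAt
  have hda : HasFDerivAt Φ (L : E →L[ℝ] F) a := by rw [hL]; exact hd a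
  let e := (hΦ.contDiffAt (x := a)).toOpenPartialHomeomorph Φ hda hn
  have ha : a ∈ e.source := ContDiffAt.mem_toOpenPartialHomeomorph_source hΦ.contDiffAt hda hn
  have hta : Φ a ∈ e.target := ContDiffAt.image_mem_toOpenPartialHomeomorph_target hΦ.contDiffAt hda hn
  have hea : e.symm (Φ a) = a := e.left_inv ha
  have hcont : Continuous (fderiv ℝ Φ) := hΦ.continuous_fderiv hn
  have hopen : {x : E | fderiv ℝ Φ x ∈ Set.range ((↑) : (E ≃L[ℝ] F) → E →L[ℝ] F)} ∈ 𝓝 a := by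
    apply hcont.continuousAt
    exact (ContinuousLinearEquiv.isOpen (𝕜 := ℝ) (E := E) (F := F)).mem_nhds ⟨L, hL⟩
  have hcs : ContinuousAt e.symm (Φ a) := e.symm.continuousAt hta
  have hS : {y | y ∈ e.target ∧ fderiv ℝ Φ (e.symm y) ∈ Set.range ((↑) : (E ≃L[ℝ] F) → E →L[ℝ] F)} ∈ 𝓝 (Φ a) := by
    apply inter_mem (e.open_target.mem_nhds hta)
    have hcs' : Tendsto e.symm (𝓝 (Φ a)) (𝓝 a) := by
      have := hcs.tendsto; rwa [hea] at this
    exact hcs' hopen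
  obtain ⟨Θ, hΘ, heq⟩ := gse_global_ext e.symm (Φ a) _ hS (by
    rintro y ⟨hy, M, hM⟩
    refine e.contDiffAt_symm (f₀' := M) hy ?_ hΦ.contDiffAt
    rw [hM]; exact hd _)
  have hr : ∀ᶠ p in 𝓝 (Φ a), Φ (Θ p) = p := by
    filter_upwards [heq, e.open_target.mem_nhds hta] with p hp hp2
    rw [hp]; exact e.right_inv hp2
  have hl : ∀ᶠ p in 𝓝 a, Θ (Φ p) = p := by
    filter_upwards [hΦ.continuous.continuousAt.eventually heq, e.open_source.mem_nhds ha] with p hp hp2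
    rw [hp]; exact e.left_inv hp2
  have h0 : Θ (Φ a) = a := hl.self_of_nhds
  refine ⟨Θ, hΘ, h0, hr, hl, ?_⟩
  have hdΘ : HasFDerivAt Θ (fderiv ℝ Θ (Φ a)) (Φ a) := (hΘ.differentiable hn _).hasFDerivAt
  have c1 : (fderiv ℝ Θ (Φ a)).comp (fderiv ℝ Φ a) = ContinuousLinearMap.id ℝ E := by
    have := (hdΘ.comp a (hd a)).congr_of_eventuallyEq (f₁ := id) (by
      filter_upwards [hl] with p hp; simp [hp])
    exact this.unique (hasFDerivAt_id a)
  have c1' : ∀ v, fderiv ℝ Θ (Φ a) (fderiv ℝ Φ a v) = v := fun v => by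
    have := congrArg (fun M => M v) c1; simpa using this
  constructor
  · intro v w hvw
    obtain ⟨v', rfl⟩ := hb.2 v
    obtain ⟨w', rfl⟩ := hb.2 w
    rw [c1', c1'] at hvw; rw [hvw]
  · intro v; exact ⟨_, c1' v⟩

lemma gse_implicit (H : E × F → F) (b : F) (hH : ContDiff ℝ (⊤ : ℕ∞) H) (h0 : H (0, b) = 0)
    (hinj : ∀ v : F, fderiv ℝ H (0, b) (0, v) = 0 → v = 0) :
    ∃ σ : E → F, ContDiff ℝ (⊤ : ℕ∞) σ ∧ σ 0 = b ∧ ∀ᶠ x in 𝓝 (0 : E), H (x, σ x) = 0 := by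
  have hn : ((⊤ : ℕ∞) : WithTop ℕ∞) ≠ 0 := by simp
  let Φ : E × F → E × F := fun p => (p.1, H p)
  have hΦ : ContDiff ℝ (⊤ : ℕ∞) Φ := contDiff_fst.prodMk hH
  have hfd : fderiv ℝ Φ (0, b) = (ContinuousLinearMap.fst ℝ E F).prod (fderiv ℝ H (0, b)) :=
    (hasFDerivAt_fst.prodMk (hH.differentiable hn _).hasFDerivAt).fderiv
  have hb : Function.Bijective (fderiv ℝ Φ (0, b)) := by
    have hi : Function.Injective (fderiv ℝ Φ (0, b)).toLinearMap := by
      rw [← LinearMap.ker_eq_bot, LinearMap.ker_eq_bot']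
      rintro ⟨u, v⟩ huv
      rw [hfd] at huv
      have h1 : u = 0 := congrArg Prod.fst huv
      have h2 : fderiv ℝ H (0, b) (u, v) = 0 := congrArg Prod.snd huv
      subst h1
      rw [hinj v h2]; rfl
    exact ⟨hi, LinearMap.injective_iff_surjective.1 hi⟩
  obtain ⟨Θ, hΘ, hΘ0, hr, -, -⟩ := gse_inv Φ (0, b) hΦ hb
  have hΦ0 : Φ (0, b) = (0, 0) := by simp [Φ, h0]
  rw [hΦ0] at hΘ0 hr
  have hc : ContinuousAt (fun x : E => ((x, 0) : E × F)) 0 := by fun_prop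
  refine ⟨fun x => (Θ (x, 0)).2, ?_, ?_, ?_⟩
  · exact contDiff_snd.comp (hΘ.comp (contDiff_id.prodMk contDiff_const))
  · simp [hΘ0]
  · filter_upwards [hc.eventually hr] with x hx
    have h1 : (Θ (x, 0)).1 = x := congrArg Prod.fst hx
    have h2 : H (Θ (x, 0)) = 0 := congrArg Prod.snd hx
    have h3 : ((x, (Θ (x, 0)).2) : E × F) = Θ (x, 0) := Prod.ext h1.symm rfl
    rw [h3, h2]
end IFT

/-- local diffeomorphism at 0 -/
def LocDiff (φ : ℝ × ℝ → ℝ × ℝ) : Prop :=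
  ContDiff ℝ (⊤ : ℕ∞) φ ∧ φ 0 = 0 ∧ Function.Bijective (⇑(fderiv ℝ φ 0))

lemma LocDiff.id : LocDiff (fun p => p) := by
  refine ⟨contDiff_id, rfl, ?_⟩
  have : fderiv ℝ (fun p : ℝ × ℝ => p) 0 = ContinuousLinearMap.id ℝ _ := fderiv_fun_id
  rw [this]; exact Function.bijective_id

lemma LocDiff.comp {φ ψ : ℝ × ℝ → ℝ × ℝ} (h1 : LocDiff φ) (h2 : LocDiff ψ) :
    LocDiff (fun p => φ (ψ p)) := by
  have hn : ((⊤ : ℕ∞) : WithTop ℕ∞) ≠ 0 := by simp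
  refine ⟨h1.1.comp h2.1, by simp [h2.2.1, h1.2.1], ?_⟩
  have : fderiv ℝ (fun p => φ (ψ p)) 0 = (fderiv ℝ φ 0).comp (fderiv ℝ ψ 0) := by
    have := fderiv_comp (𝕜 := ℝ) (0 : ℝ × ℝ) (h1.1.differentiable hn (ψ 0)) (h2.1.differentiable hn 0)
    rw [h2.2.1] at this; exact this
  rw [this]
  exact h1.2.2.comp h2.2.2

lemma LocDiff.inv {φ : ℝ × ℝ → ℝ × ℝ} (h1 : LocDiff φ) :
    ∃ θ, LocDiff θ ∧ (∀ᶠ p in 𝓝 0, φ (θ p) = p) ∧ (∀ᶠ p in 𝓝 0, θ (φ p) = p) := by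
  obtain ⟨θ, a, b, c, d, e⟩ := gse_inv φ 0 h1.1 h1.2.2
  rw [h1.2.1] at b c e
  exact ⟨θ, ⟨a, b, e⟩, c, d⟩

lemma LocDiff.tendsto {φ : ℝ × ℝ → ℝ × ℝ} (h1 : LocDiff φ) : Tendsto φ (𝓝 0) (𝓝 0) := by
  have := h1.1.continuous.tendsto 0
  rwa [h1.2.1] at this

lemma aequiv_iff (f g : ℝ × ℝ → ℝ × ℝ) : AEquiv f g ↔
    ∃ φ ψ, LocDiff φ ∧ LocDiff ψ ∧ ∀ᶠ p in 𝓝 (0 : ℝ × ℝ), ψ (f (φ p)) = g p := by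
  unfold AEquiv LocDiff
  constructor
  · rintro ⟨φ, ψ, a, b, c, d, e, f, g⟩; exact ⟨φ, ψ, ⟨a, c, e⟩, ⟨b, d, f⟩, g⟩
  · rintro ⟨φ, ψ, ⟨a, c, e⟩, ⟨b, d, f⟩, g⟩; exact ⟨φ, ψ, a, b, c, d, e, f, g⟩

lemma AEquiv.of_rel {f M P A Q : ℝ × ℝ → ℝ × ℝ} (hP : LocDiff P) (hA : LocDiff A) (hQ : LocDiff Q)
    (hM : Tendsto M (𝓝 0) (𝓝 0)) (h : ∀ᶠ p in 𝓝 0, f (P p) = A (M (Q p))) : AEquiv f M := by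
  obtain ⟨A', hA', -, hA2⟩ := hA.inv
  obtain ⟨Q', hQ', hQ1, -⟩ := hQ.inv
  rw [aequiv_iff]
  refine ⟨fun p => P (Q' p), A', hP.comp hQ', hA', ?_⟩
  filter_upwards [hQ'.tendsto.eventually h, hQ1, hM.eventually hA2] with p h1 h2 h3
  rw [h1, h2, h3]

lemma AEquiv.symm' {f g : ℝ × ℝ → ℝ × ℝ} (hf : Tendsto f (𝓝 0) (𝓝 0)) (h : AEquiv f g) :
    AEquiv g f := by
  obtain ⟨φ, ψ, h1, h2, h3⟩ := (aequiv_iff _ _).1 h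
  exact AEquiv.of_rel LocDiff.id h2 h1 hf (h3.mono fun p hp => hp.symm)

lemma AEquiv.trans' {f g k : ℝ × ℝ → ℝ × ℝ} (h : AEquiv f g) (h' : AEquiv g k) :
    AEquiv f k := by
  obtain ⟨φ, ψ, h1, h2, h3⟩ := (aequiv_iff _ _).1 h
  obtain ⟨φb, ψb, h1', h2', h3'⟩ := (aequiv_iff _ _).1 h'
  rw [aequiv_iff]
  refine ⟨fun p => φ (φb p), fun p => ψb (ψ p), h1.comp h1', h2'.comp h2, ?_⟩
  filter_upwards [h1'.tendsto.eventually h3, h3'] with p ha hb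
  rw [ha, hb]

end
end

section
open Filter Topology
noncomputable section

lemma gse_htop : ((⊤ : ℕ∞) : WithTop ℕ∞) ≠ 0 := by simp

lemma gse_param {E : Type} [NormedAddCommGroup E] [NormedSpace ℝ E] [FiniteDimensional ℝ E] (n : ℕ) :
    ∀ {G : Type} [NormedAddCommGroup G] [NormedSpace ℝ G] [CompleteSpace G] (F : E × ℝ → G),
    ContDiff ℝ (⊤ : ℕ∞) F → ContDiff ℝ n (fun p => ∫ r in (0 : ℝ)..1, F (p, r)) := by
  have : ProperSpace E := FiniteDimensional.proper ℝ E
  induction n with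
  | zero =>
    intro G _ _ _ F hF
    rw [Nat.cast_zero, contDiff_zero]
    have := hF.continuous
    exact intervalIntegral.continuous_parametric_intervalIntegral_of_continuous' (by exact this) 0 1
  | succ n ih =>
    intro G _ _ _ F hF
    have hF' : ContDiff ℝ (⊤ : ℕ∞)
        (fun q : E × ℝ => (fderiv ℝ F q).comp (ContinuousLinearMap.inl ℝ E ℝ)) := by
      have h1 : ContDiff ℝ (⊤ : ℕ∞) (fderiv ℝ F) := (contDiff_infty_iff_fderiv.1 hF).2
      exact h1.clm_comp contDiff_const
    rw [Nat.cast_succ]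
    rw [contDiff_succ_iff_hasFDerivAt]
    refine ⟨_, ih _ hF', ?_⟩
    intro p
    have hc := hF'.continuous
    have hK : IsCompact ((Metric.closedBall p 1) ×ˢ (Set.Icc (0 : ℝ) 1)) :=
      (isCompact_closedBall p 1).prod isCompact_Icc
    obtain ⟨C, hC⟩ := hK.exists_bound_of_continuousOn hc.continuousOn
    have hFc := hF.continuous
    refine intervalIntegral.hasFDerivAt_integral_of_dominated_of_fderiv_le
      (bound := fun _ => C) (F' := fun (p : E) (r : ℝ) => (fderiv ℝ F (p, r)).comp (ContinuousLinearMap.inl ℝ E ℝ)) (Metric.closedBall_mem_nhds p one_pos) ?_ ?_ ?_ ?_ ?_ ?_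
    · refine Eventually.of_forall fun x => Continuous.aestronglyMeasurable (by fun_prop)
    · exact Continuous.intervalIntegrable (by fun_prop) _ _
    · have : Continuous fun r : ℝ => (fderiv ℝ F (p, r)).comp (ContinuousLinearMap.inl ℝ E ℝ) :=
        hc.comp (by fun_prop : Continuous fun r : ℝ => (p, r))
      exact this.aestronglyMeasurable
    · refine Eventually.of_forall fun t ht x hx => hC (x, t) ⟨hx, ?_⟩
      rw [Set.uIoc_of_le zero_le_one] at ht
      exact ⟨ht.1.le, ht.2⟩
    · exact intervalIntegrable_const
    · refine Eventually.of_forall fun t ht x hx => ?_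
      have h1 : HasFDerivAt F (fderiv ℝ F (x, t)) (x, t) := (hF.differentiable gse_htop _).hasFDerivAt
      exact h1.comp x (hasFDerivAt_prodMk_left x t)

lemma gse_param_top {E : Type} [NormedAddCommGroup E] [NormedSpace ℝ E] [FiniteDimensional ℝ E]
    {G : Type} [NormedAddCommGroup G] [NormedSpace ℝ G] [CompleteSpace G] (F : E × ℝ → G)
    (hF : ContDiff ℝ (⊤ : ℕ∞) F) : ContDiff ℝ (⊤ : ℕ∞) (fun p => ∫ r in (0 : ℝ)..1, F (p, r)) :=
  contDiff_infty.2 fun n => gse_param n F hF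

lemma dop_smooth {g : ℝ × ℝ → ℝ} (hg : ContDiff ℝ (⊤ : ℕ∞) g) (v : ℝ × ℝ) :
    ContDiff ℝ (⊤ : ℕ∞) (dop v g) :=
  ((contDiff_infty_iff_fderiv.1 hg).2).clm_apply contDiff_const

lemma pdx_smooth {g : ℝ × ℝ → ℝ} (hg : ContDiff ℝ (⊤ : ℕ∞) g) : ContDiff ℝ (⊤ : ℕ∞) (pdx g) :=
  dop_smooth hg _

lemma pdy_smooth {g : ℝ × ℝ → ℝ} (hg : ContDiff ℝ (⊤ : ℕ∞) g) : ContDiff ℝ (⊤ : ℕ∞) (pdy g) :=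
  dop_smooth hg _

lemma pdy_iter_smooth {g : ℝ × ℝ → ℝ} (hg : ContDiff ℝ (⊤ : ℕ∞) g) (n : ℕ) :
    ContDiff ℝ (⊤ : ℕ∞) (pdy^[n] g) := by
  induction n with
  | zero => exact hg
  | succ n ih => rw [Function.iterate_succ_apply']; exact pdy_smooth ih

lemma gse_hasFDerivAt {g : ℝ × ℝ → ℝ} (hg : ContDiff ℝ (⊤ : ℕ∞) g) (p : ℝ × ℝ) :
    HasFDerivAt g (fderiv ℝ g p) p := (hg.differentiable gse_htop p).hasFDerivAt

lemma gse_fderiv_apply {g : ℝ × ℝ → ℝ} (p v : ℝ × ℝ) :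
    fderiv ℝ g p v = v.1 * pdx g p + v.2 * pdy g p := by
  have : v = v.1 • ((1 : ℝ), (0 : ℝ)) + v.2 • ((0 : ℝ), (1 : ℝ)) := by
    ext <;> simp
  conv_lhs => rw [this, map_add, map_smul, map_smul]
  rfl

lemma gse_hasDerivAt_y {g : ℝ × ℝ → ℝ} (hg : ContDiff ℝ (⊤ : ℕ∞) g) (x y : ℝ) :
    HasDerivAt (fun y => g (x, y)) (pdy g (x, y)) y := by
  have h := (gse_hasFDerivAt hg (x, y)).comp_hasDerivAt y ((hasDerivAt_const y x).prodMk (hasDerivAt_id y))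
  exact h

lemma gse_hasDerivAt_x {g : ℝ × ℝ → ℝ} (hg : ContDiff ℝ (⊤ : ℕ∞) g) (x y : ℝ) :
    HasDerivAt (fun x => g (x, y)) (pdx g (x, y)) x := by
  have h := (gse_hasFDerivAt hg (x, y)).comp_hasDerivAt x ((hasDerivAt_id x).prodMk (hasDerivAt_const x y))
  exact h

/-- Taylor's formula in the second variable with smooth remainder. -/
lemma gse_taylor (n : ℕ) : ∀ (H : ℝ × ℝ → ℝ), ContDiff ℝ (⊤ : ℕ∞) H →
    ∃ R : ℝ × ℝ → ℝ, ContDiff ℝ (⊤ : ℕ∞) R ∧ ∀ x y : ℝ,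
      H (x, y) = ∑ j ∈ Finset.range n, y ^ j / (j.factorial : ℝ) * (pdy^[j] H) (x, 0) + y ^ n * R (x, y) := by
  induction n with
  | zero => intro H hH; exact ⟨H, hH, fun x y => by simp⟩
  | succ n ih =>
    intro H hH
    obtain ⟨R, hR, hRe⟩ := ih (pdy H) (pdy_smooth hH)
    refine ⟨fun p => ∫ r in (0 : ℝ)..1, r ^ n * R (p.1, r * p.2), ?_, ?_⟩
    · refine gse_param_top (fun q : (ℝ × ℝ) × ℝ => q.2 ^ n * R (q.1.1, q.2 * q.1.2)) ?_
      refine (contDiff_snd.pow n).mul (hR.comp ?_)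
      fun_prop
    · intro x y
      have h1 : ∫ r in (0 : ℝ)..1, pdy H (x, r * y) * y = H (x, y) - H (x, 0) := by
        have hd : ∀ r ∈ Set.uIcc (0 : ℝ) 1, HasDerivAt (fun r => H (x, r * y)) (pdy H (x, r * y) * y) r := by
          intro r _
          have := (gse_hasDerivAt_y hH x (r * y)).comp r ((hasDerivAt_id r).mul_const y)
          rw [one_mul] at this
          exact this
        have hcont : Continuous fun r : ℝ => pdy H (x, r * y) * y := by
          have := (pdy_smooth hH).continuous
          fun_prop
        rw [intervalIntegral.integral_eq_sub_of_hasDerivAt hd (hcont.intervalIntegrable _ _)]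
        simp
      have hRc := hR.continuous
      have h2 : ∫ r in (0 : ℝ)..1, pdy H (x, r * y) * y =
          ∑ j ∈ Finset.range n, y ^ (j + 1) / ((j + 1).factorial : ℝ) * (pdy^[j + 1] H) (x, 0)
            + y ^ (n + 1) * ∫ r in (0 : ℝ)..1, r ^ n * R (x, r * y) := by
        have e : ∀ r : ℝ, pdy H (x, r * y) * y =
            (∑ j ∈ Finset.range n, r ^ j * (y ^ (j + 1) / (j.factorial : ℝ) * (pdy^[j + 1] H) (x, 0)))
              + y ^ (n + 1) * (r ^ n * R (x, r * y)) := by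
          intro r
          rw [hRe, add_mul, Finset.sum_mul]
          congr 1
          · refine Finset.sum_congr rfl fun j _ => ?_
            rw [Function.iterate_succ_apply, mul_pow]; ring
          · rw [mul_pow]; ring
        simp_rw [e]
        rw [intervalIntegral.integral_add, intervalIntegral.integral_const_mul,
          intervalIntegral.integral_finsetSum]
        · congr 1
          refine Finset.sum_congr rfl fun j _ => ?_
          rw [intervalIntegral.integral_mul_const, integral_pow]
          rw [Nat.factorial_succ]
          have : (j.factorial : ℝ) ≠ 0 := by positivity
          have : (j : ℝ) + 1 ≠ 0 := by positivity
          push_cast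
          field_simp
          simp
        · intro j _
          exact Continuous.intervalIntegrable (by fun_prop) _ _
        · exact Continuous.intervalIntegrable (by fun_prop) _ _
        · exact Continuous.intervalIntegrable (by fun_prop) _ _
      rw [h2] at h1
      rw [Finset.sum_range_succ']
      simp only [pow_zero, Nat.factorial_zero, Nat.cast_one, Function.iterate_zero, id]
      linarith

end
end

section
open Filter Topology
noncomputable section

lemma gse_kappa : ∃ κ : ℝ → ℝ, ContDiff ℝ (⊤ : ℕ∞) κ ∧ ∀ y, κ (y ^ 2) = Real.cos y := by
  let c : ℕ → ℝ := fun n => (-1) ^ n / ((2 * n).factorial : ℝ)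
  have hrad : (FormalMultilinearSeries.ofScalars ℝ c).radius = ⊤ := by
    apply FormalMultilinearSeries.radius_eq_top_of_summable_norm
    intro r
    refine Summable.of_nonneg_of_le (fun n => by positivity) (fun n => ?_) (Real.summable_pow_div_factorial (r : ℝ))
    rw [FormalMultilinearSeries.ofScalars_norm]
    simp only [c, norm_div, norm_pow, norm_neg, norm_one, one_pow]
    rw [Real.norm_natCast, div_mul_eq_mul_div, one_mul]
    gcongr
    omega
  have hps := (FormalMultilinearSeries.ofScalars ℝ c).hasFPowerSeriesOnBall (by rw [hrad]; simp)
  refine ⟨(FormalMultilinearSeries.ofScalars ℝ c).sum, ?_, ?_⟩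
  · apply AnalyticOnNhd.contDiff
    have := hps.analyticOnNhd
    rw [hrad] at this
    simpa using this
  · intro y
    have h := FormalMultilinearSeries.ofScalars_sum_eq c (y ^ 2)
    rw [FormalMultilinearSeries.ofScalarsSum] at h
    rw [h, ← (Real.hasSum_cos y).tsum_eq]
    refine tsum_congr fun n => ?_
    simp only [c, smul_eq_mul]
    rw [← pow_mul]; ring

lemma gse_kernel : ∃ k : ℝ → ℝ, ContDiff ℝ (⊤ : ℕ∞) k ∧ (∀ y, k (y ^ 2) = Real.cos y) ∧
    (∀ y, 2 * y * deriv k (y ^ 2) = - Real.sin y) ∧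
    ∀ n, ∃ C, ∀ v, |iteratedDeriv n k v| ≤ C := by
  obtain ⟨κ, hκ, hκc⟩ := gse_kappa
  let k : ℝ → ℝ := fun v => Real.smoothTransition (v + 2) * κ v
  have hk : ContDiff ℝ (⊤ : ℕ∞) k :=
    (Real.smoothTransition.contDiff.comp (contDiff_id.add contDiff_const)).mul hκ
  have hkc : ∀ y, k (y ^ 2) = Real.cos y := by
    intro y
    simp only [k]
    rw [Real.smoothTransition.one_of_one_le (by nlinarith [sq_nonneg y]), one_mul, hκc]
  have hit : ∀ n v, HasDerivAt (iteratedDeriv n k) (iteratedDeriv (n + 1) k v) v := by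
    intro n v
    rw [iteratedDeriv_succ]
    have : Differentiable ℝ (iteratedDeriv n k) := hk.differentiable_iteratedDeriv n (by exact_mod_cast WithTop.coe_lt_top _)
    exact (this v).hasDerivAt
  have h1 : ∀ y, 2 * y * iteratedDeriv 1 k (y ^ 2) = - Real.sin y := by
    intro y
    have e : HasDerivAt (fun y => iteratedDeriv 0 k (y ^ 2)) (iteratedDeriv 1 k (y ^ 2) * (2 * y)) y := by
      have := (hit 0 (y ^ 2)).comp y (hasDerivAt_pow 2 y)
      simpa [Function.comp_def] using this
    have e2 : (fun y => iteratedDeriv 0 k (y ^ 2)) = Real.cos := by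
      funext y; simp [hkc]
    rw [e2] at e
    have := e.unique (Real.hasDerivAt_cos y)
    linarith
  have h2 : ∀ y, 2 * iteratedDeriv 1 k (y ^ 2) + 4 * y ^ 2 * iteratedDeriv 2 k (y ^ 2) = - k (y ^ 2) := by
    intro y
    have e : HasDerivAt (fun y => 2 * y * iteratedDeriv 1 k (y ^ 2))
        (2 * iteratedDeriv 1 k (y ^ 2) + 2 * y * (iteratedDeriv 2 k (y ^ 2) * (2 * y))) y := by
      have := (hit 1 (y ^ 2)).comp y (hasDerivAt_pow 2 y)
      have h3 := (((hasDerivAt_id y).const_mul 2).mul this)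
      exact h3.congr_deriv (by simp)
    have e2 : (fun y => 2 * y * iteratedDeriv 1 k (y ^ 2)) = fun y => - Real.sin y := by
      funext y; exact h1 y
    rw [e2] at e
    have := e.unique (Real.hasDerivAt_sin y).neg
    rw [hkc]
    linarith
  have hode : ∀ n : ℕ, ∀ v : ℝ, 0 < v → 4 * v * iteratedDeriv (n + 2) k v +
      (4 * n + 2) * iteratedDeriv (n + 1) k v + iteratedDeriv n k v = 0 := by
    intro n
    induction n with
    | zero =>
      intro v hv
      have := h2 (Real.sqrt v)
      rw [Real.sq_sqrt hv.le] at this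
      simp only [iteratedDeriv_zero]
      push_cast
      linarith
    | succ n ih =>
      intro v hv
      have e : HasDerivAt (fun v => 4 * v * iteratedDeriv (n + 2) k v +
        (4 * n + 2) * iteratedDeriv (n + 1) k v + iteratedDeriv n k v)
        (4 * iteratedDeriv (n + 2) k v + 4 * v * iteratedDeriv (n + 3) k v +
          (4 * n + 2) * iteratedDeriv (n + 2) k v + iteratedDeriv (n + 1) k v) v := by
        have h3 := ((((hasDerivAt_id v).const_mul 4).mul (hit (n + 2) v)).add
          ((hit (n + 1) v).const_mul (4 * (n : ℝ) + 2))).add (hit n v)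
        exact h3.congr_deriv (by simp)
      have e0 : HasDerivAt (fun v => 4 * v * iteratedDeriv (n + 2) k v +
        (4 * n + 2) * iteratedDeriv (n + 1) k v + iteratedDeriv n k v) 0 v := by
        refine (hasDerivAt_const v (0 : ℝ)).congr_of_eventuallyEq ?_
        filter_upwards [lt_mem_nhds hv] with w hw
        exact ih w hw
      have := e.unique e0
      push_cast
      rw [show n + 1 + 2 = n + 3 by ring, show n + 1 + 1 = n + 2 by ring]
      linarith
  refine ⟨k, hk, hkc, by simpa using h1, ?_⟩
  have hbig : ∀ n, (∃ C, ∀ v, 1 ≤ v → |iteratedDeriv n k v| ≤ C) ∧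
      (∃ C, ∀ v, 1 ≤ v → |iteratedDeriv (n + 1) k v| ≤ C) := by
    intro n
    induction n with
    | zero =>
      refine ⟨⟨1, fun v hv => ?_⟩, ⟨1, fun v hv => ?_⟩⟩
      · have := hkc (Real.sqrt v)
        rw [Real.sq_sqrt (by linarith)] at this
        rw [iteratedDeriv_zero, this]; exact Real.abs_cos_le_one _
      · have := h1 (Real.sqrt v)
        rw [Real.sq_sqrt (by linarith)] at this
        have hs : 1 ≤ Real.sqrt v := Real.one_le_sqrt.2 hv
        have h5 : |2 * Real.sqrt v * iteratedDeriv 1 k v| ≤ 1 := by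
          rw [this, abs_neg]; exact Real.abs_sin_le_one _
        rw [abs_mul, abs_of_pos (by linarith)] at h5
        rw [zero_add]
        nlinarith [abs_nonneg (iteratedDeriv 1 k v)]
    | succ n ih =>
      refine ⟨ih.2, ?_⟩
      obtain ⟨⟨C, hC⟩, ⟨D, hD⟩⟩ := ih
      refine ⟨(4 * n + 2) * D + C, fun v hv => ?_⟩
      have := hode n v (by linarith)
      have h5 : |4 * v * iteratedDeriv (n + 2) k v| ≤ (4 * n + 2) * D + C := by
        have e : 4 * v * iteratedDeriv (n + 2) k v =
          -((4 * n + 2) * iteratedDeriv (n + 1) k v + iteratedDeriv n k v) := by linarith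
        rw [e, abs_neg]
        refine (abs_add_le _ _).trans (add_le_add ?_ (hC v hv))
        rw [abs_mul, abs_of_nonneg (by positivity)]
        exact mul_le_mul_of_nonneg_left (hD v hv) (by positivity)
      rw [abs_mul, abs_of_pos (by linarith)] at h5
      rw [show n + 1 + 1 = n + 2 by ring]
      nlinarith [abs_nonneg (iteratedDeriv (n + 2) k v)]
  intro n
  obtain ⟨C, hC⟩ := (hbig n).1
  have hcont : Continuous (iteratedDeriv n k) := hk.continuous_iteratedDeriv n (by exact_mod_cast le_top)
  obtain ⟨D, hD⟩ := (isCompact_Icc (a := (-2 : ℝ)) (b := 1)).exists_bound_of_continuousOn hcont.continuousOn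
  refine ⟨max C (max D 0), fun v => ?_⟩
  rcases lt_or_ge v (-2) with hv | hv
  · have : k =ᶠ[𝓝 v] fun _ => 0 := by
      filter_upwards [gt_mem_nhds hv] with w hw
      simp only [k]
      rw [Real.smoothTransition.zero_of_nonpos (by linarith), zero_mul]
    rw [this.iteratedDeriv_eq]
    simp
  · rcases le_or_gt 1 v with h | h
    · exact (hC v h).trans (le_max_left _ _)
    · exact ((hD v ⟨hv, h.le⟩).trans (le_max_left _ _)).trans (le_max_right _ _)

end
end

section
open Filter Topology
noncomputable section

open MeasureTheory in
/-- continuous and integrable against all powers -/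
def Rapid (G : ℂ → ℂ) : Prop := Continuous G ∧ ∀ n : ℕ, Integrable (fun ξ : ℂ => ‖ξ‖ ^ n * ‖G ξ‖)

open MeasureTheory in
lemma Rapid.mul {G m : ℂ → ℂ} (hG : Rapid G) (hm : Continuous m) (C : ℝ) (d : ℕ)
    (hb : ∀ ξ, ‖m ξ‖ ≤ C * ‖ξ‖ ^ d) : Rapid (fun ξ => m ξ * G ξ) := by
  refine ⟨hm.mul hG.1, fun n => ?_⟩
  have hc := hG.1
  refine Integrable.mono' ((hG.2 (n + d)).const_mul C) (Continuous.aestronglyMeasurable (by fun_prop)) ?_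
  refine Eventually.of_forall fun ξ => ?_
  rw [norm_mul, norm_pow, norm_norm, norm_norm, norm_mul, pow_add]
  have := mul_le_mul_of_nonneg_left (mul_le_mul_of_nonneg_right (hb ξ) (norm_nonneg (G ξ))) (pow_nonneg (norm_nonneg ξ) n)
  linarith

/-- integrand -/
def gseT (k : ℝ → ℝ) (G : ℂ → ℂ) (j : ℕ) (p : ℝ × ℝ × ℝ) (ξ : ℂ) : ℂ :=
  G ξ * Complex.exp ((2 * Real.pi * (ξ.re * p.1 + ξ.im * p.2.1) : ℝ) * Complex.I) *
    (iteratedDeriv j k ((2 * Real.pi * ξ.im) ^ 2 * p.2.2) : ℝ)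

/-- oscillatory integral -/
def gseI (k : ℝ → ℝ) (G : ℂ → ℂ) (j : ℕ) (p : ℝ × ℝ × ℝ) : ℂ := ∫ ξ : ℂ, gseT k G j p ξ

section osc
variable {k : ℝ → ℝ}

lemma gseT_cont (hk : ContDiff ℝ (⊤ : ℕ∞) k) {G : ℂ → ℂ} (hG : Rapid G) (j : ℕ) (p : ℝ × ℝ × ℝ) : Continuous (gseT k G j p) := by
  have h1 := hG.1
  have h2 : Continuous (iteratedDeriv j k) := hk.continuous_iteratedDeriv j (by exact_mod_cast le_top)
  unfold gseT
  fun_prop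

lemma gseT_bound (hb : ∀ n, ∃ C, ∀ v, |iteratedDeriv n k v| ≤ C) (G : ℂ → ℂ) (j : ℕ) : ∃ C, 0 ≤ C ∧ ∀ p ξ, ‖gseT k G j p ξ‖ ≤ C * ‖G ξ‖ := by
  obtain ⟨C, hC⟩ := hb j
  refine ⟨C, (abs_nonneg _).trans (hC 0), fun p ξ => ?_⟩
  unfold gseT
  rw [norm_mul, norm_mul, Complex.norm_exp_ofReal_mul_I, mul_one, Complex.norm_real, mul_comm]
  exact mul_le_mul_of_nonneg_right (hC _) (norm_nonneg _)

open MeasureTheory in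
lemma gseT_int (hk : ContDiff ℝ (⊤ : ℕ∞) k) (hb : ∀ n, ∃ C, ∀ v, |iteratedDeriv n k v| ≤ C) {G : ℂ → ℂ} (hG : Rapid G) (j : ℕ) (p : ℝ × ℝ × ℝ) : Integrable (gseT k G j p) := by
  obtain ⟨C, h0, hC⟩ := gseT_bound hb G j
  have := hG.2 0
  simp only [pow_zero, one_mul] at this
  exact Integrable.mono' (this.const_mul C) (gseT_cont hk hG j p).aestronglyMeasurable
    (Eventually.of_forall fun ξ => hC p ξ)

/-- coordinate functionals, as maps into `ℂ`-valued functionals -/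
def gseL1 : ℂ →L[ℝ] (ℝ × ℝ × ℝ →L[ℝ] ℂ) :=
  ContinuousLinearMap.smulRightL ℝ (ℝ × ℝ × ℝ) ℂ (ContinuousLinearMap.fst ℝ ℝ (ℝ × ℝ))
def gseL2 : ℂ →L[ℝ] (ℝ × ℝ × ℝ →L[ℝ] ℂ) :=
  ContinuousLinearMap.smulRightL ℝ (ℝ × ℝ × ℝ) ℂ
    ((ContinuousLinearMap.fst ℝ ℝ ℝ).comp (ContinuousLinearMap.snd ℝ ℝ (ℝ × ℝ)))
def gseL3 : ℂ →L[ℝ] (ℝ × ℝ × ℝ →L[ℝ] ℂ) :=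
  ContinuousLinearMap.smulRightL ℝ (ℝ × ℝ × ℝ) ℂ
    ((ContinuousLinearMap.snd ℝ ℝ ℝ).comp (ContinuousLinearMap.snd ℝ ℝ (ℝ × ℝ)))

def gseG1 (G : ℂ → ℂ) (ξ : ℂ) : ℂ := (2 * Real.pi * ξ.re * Complex.I) * G ξ
def gseG2 (G : ℂ → ℂ) (ξ : ℂ) : ℂ := (2 * Real.pi * ξ.im * Complex.I) * G ξ
def gseG3 (G : ℂ → ℂ) (ξ : ℂ) : ℂ := ((2 * Real.pi * ξ.im) ^ 2 : ℝ) * G ξ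

lemma Rapid.G1 {G : ℂ → ℂ} (hG : Rapid G) : Rapid (gseG1 G) := by
  refine hG.mul (by fun_prop) (2 * Real.pi) 1 fun ξ => ?_
  have := Complex.abs_re_le_norm ξ
  simp only [norm_mul, Complex.norm_I, Complex.norm_real, Complex.norm_ofNat, pow_one, mul_one, Real.norm_eq_abs, abs_of_pos Real.pi_pos]
  gcongr

lemma Rapid.G2 {G : ℂ → ℂ} (hG : Rapid G) : Rapid (gseG2 G) := by
  refine hG.mul (by fun_prop) (2 * Real.pi) 1 fun ξ => ?_
  have := Complex.abs_im_le_norm ξ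
  simp only [norm_mul, Complex.norm_I, Complex.norm_real, Complex.norm_ofNat, pow_one, mul_one, Real.norm_eq_abs, abs_of_pos Real.pi_pos]
  gcongr

lemma Rapid.G3 {G : ℂ → ℂ} (hG : Rapid G) : Rapid (gseG3 G) := by
  refine hG.mul (by fun_prop) ((2 * Real.pi) ^ 2) 2 fun ξ => ?_
  have := Complex.abs_im_le_norm ξ
  rw [Complex.norm_real, Real.norm_eq_abs, abs_pow, abs_mul, abs_of_pos (by positivity : 0 < 2 * Real.pi), mul_pow]
  gcongr

lemma gseT_deriv (hk : ContDiff ℝ (⊤ : ℕ∞) k) (G : ℂ → ℂ) (j : ℕ) (p : ℝ × ℝ × ℝ) (ξ : ℂ) :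
    HasFDerivAt (fun p => gseT k G j p ξ) (gseL1 (gseT k (gseG1 G) j p ξ) +
      gseL2 (gseT k (gseG2 G) j p ξ) + gseL3 (gseT k (gseG3 G) (j + 1) p ξ)) p := by
  have hit : ∀ v, HasDerivAt (iteratedDeriv j k) (iteratedDeriv (j + 1) k v) v := by
    intro v
    rw [iteratedDeriv_succ]
    have : Differentiable ℝ (iteratedDeriv j k) := hk.differentiable_iteratedDeriv j (by exact_mod_cast WithTop.coe_lt_top _)
    exact (this v).hasDerivAt
  have e1 : HasFDerivAt (fun p : ℝ × ℝ × ℝ => p.1) (ContinuousLinearMap.fst ℝ ℝ (ℝ × ℝ)) p := hasFDerivAt_fst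
  have e2 : HasFDerivAt (fun p : ℝ × ℝ × ℝ => p.2.1) ((ContinuousLinearMap.fst ℝ ℝ ℝ).comp (ContinuousLinearMap.snd ℝ ℝ (ℝ × ℝ))) p :=
    hasFDerivAt_fst.comp p hasFDerivAt_snd
  have e3 : HasFDerivAt (fun p : ℝ × ℝ × ℝ => p.2.2) ((ContinuousLinearMap.snd ℝ ℝ ℝ).comp (ContinuousLinearMap.snd ℝ ℝ (ℝ × ℝ))) p :=
    hasFDerivAt_snd.comp p hasFDerivAt_snd
  have a1 := ((e1.const_mul ξ.re).add (e2.const_mul ξ.im)).const_mul (2 * Real.pi)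
  have a2 := ((Complex.ofRealCLM.hasFDerivAt.comp p a1).mul_const Complex.I).cexp
  have a3 := Complex.ofRealCLM.hasFDerivAt.comp p ((hit ((2 * Real.pi * ξ.im) ^ 2 * p.2.2)).comp_hasFDerivAt p (e3.const_mul ((2 * Real.pi * ξ.im) ^ 2)))
  have a4 := (a2.const_mul (G ξ)).mul a3
  refine HasFDerivAt.congr_fderiv (f := fun p => gseT k G j p ξ) a4 ?_
  ext v
  · simp [gseL1, gseL2, gseL3, gseT, gseG1, gseG2, gseG3]; ring
  · simp [gseL1, gseL2, gseL3, gseT, gseG1, gseG2, gseG3]; ring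
  · simp [gseL1, gseL2, gseL3, gseT, gseG1, gseG2, gseG3]; ring

open MeasureTheory in
lemma gseI_deriv (hk : ContDiff ℝ (⊤ : ℕ∞) k) (hb : ∀ n, ∃ C, ∀ v, |iteratedDeriv n k v| ≤ C) {G : ℂ → ℂ} (hG : Rapid G) (j : ℕ) (p : ℝ × ℝ × ℝ) :
    HasFDerivAt (gseI k G j) (gseL1 (gseI k (gseG1 G) j p) +
      gseL2 (gseI k (gseG2 G) j p) + gseL3 (gseI k (gseG3 G) (j + 1) p)) p := by
  obtain ⟨C1, h01, hC1⟩ := gseT_bound hb (gseG1 G) j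
  obtain ⟨C2, h02, hC2⟩ := gseT_bound hb (gseG2 G) j
  obtain ⟨C3, h03, hC3⟩ := gseT_bound hb (gseG3 G) (j + 1)
  have i1 := gseT_int hk hb hG.G1 j p
  have i2 := gseT_int hk hb hG.G2 j p
  have i3 := gseT_int hk hb hG.G3 (j + 1) p
  have key := hasFDerivAt_integral_of_dominated_of_fderiv_le (𝕜 := ℝ) (μ := volume) (x₀ := p)
    (F := fun p ξ => gseT k G j p ξ)
    (F' := fun p ξ => gseL1 (gseT k (gseG1 G) j p ξ) +
      gseL2 (gseT k (gseG2 G) j p ξ) + gseL3 (gseT k (gseG3 G) (j + 1) p ξ))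
    (bound := fun ξ => ‖gseL1‖ * (C1 * ‖gseG1 G ξ‖) + ‖gseL2‖ * (C2 * ‖gseG2 G ξ‖) + ‖gseL3‖ * (C3 * ‖gseG3 G ξ‖))
    (s := Set.univ) univ_mem (Eventually.of_forall fun p => (gseT_cont hk hG j p).aestronglyMeasurable)
    (gseT_int hk hb hG j p) ?_ ?_ ?_ ?_
  · refine key.congr_fderiv ?_
    rw [integral_add, integral_add, ContinuousLinearMap.integral_comp_comm, ContinuousLinearMap.integral_comp_comm, ContinuousLinearMap.integral_comp_comm]
    · rfl
    · exact i3
    · exact i2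
    · exact i1
    · exact gseL1.integrable_comp i1
    · exact gseL2.integrable_comp i2
    · exact (gseL1.integrable_comp i1).add (gseL2.integrable_comp i2)
    · exact gseL3.integrable_comp i3
  · exact (((gseL1.integrable_comp i1).add (gseL2.integrable_comp i2)).add (gseL3.integrable_comp i3)).aestronglyMeasurable
  · refine Eventually.of_forall fun ξ x _ => ?_
    refine (norm_add_le _ _).trans (add_le_add ((norm_add_le _ _).trans (add_le_add ?_ ?_)) ?_)
    · exact (gseL1.le_opNorm _).trans (mul_le_mul_of_nonneg_left (hC1 _ _) (norm_nonneg _))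
    · exact (gseL2.le_opNorm _).trans (mul_le_mul_of_nonneg_left (hC2 _ _) (norm_nonneg _))
    · exact (gseL3.le_opNorm _).trans (mul_le_mul_of_nonneg_left (hC3 _ _) (norm_nonneg _))
  · have j1 := hG.G1.2 0
    have j2 := hG.G2.2 0
    have j3 := hG.G3.2 0
    simp only [pow_zero, one_mul] at j1 j2 j3
    exact (((j1.const_mul C1).const_mul _).add ((j2.const_mul C2).const_mul _)).add ((j3.const_mul C3).const_mul _)
  · exact Eventually.of_forall fun ξ x _ => gseT_deriv hk G j x ξ

lemma gseI_smooth (hk : ContDiff ℝ (⊤ : ℕ∞) k) (hb : ∀ n, ∃ C, ∀ v, |iteratedDeriv n k v| ≤ C) {G : ℂ → ℂ} (hG : Rapid G) (j : ℕ) : ContDiff ℝ (⊤ : ℕ∞) (gseI k G j) := by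
  rw [contDiff_infty]
  intro n
  induction n generalizing G j with
  | zero =>
    rw [Nat.cast_zero, contDiff_zero]
    have : Differentiable ℝ (gseI k G j) := fun p => (gseI_deriv hk hb hG j p).differentiableAt
    exact this.continuous
  | succ n ih =>
    rw [Nat.cast_succ, contDiff_succ_iff_hasFDerivAt]
    refine ⟨_, ?_, fun p => gseI_deriv hk hb hG j p⟩
    exact ((gseL1.contDiff.comp (ih hG.G1 j)).add (gseL2.contDiff.comp (ih hG.G2 j))).add
      (gseL3.contDiff.comp (ih hG.G3 (j + 1)))
end osc

open MeasureTheory FourierTransform in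
/-- Whitney-type decomposition of a compactly supported function. -/
lemma gse_whitney (g : ℝ × ℝ → ℝ) (hg : ContDiff ℝ (⊤ : ℕ∞) g) (hc : HasCompactSupport g) :
    ∃ E O : ℝ × ℝ × ℝ → ℝ, ContDiff ℝ (⊤ : ℕ∞) E ∧ ContDiff ℝ (⊤ : ℕ∞) O ∧
      ∀ x s w, g (x, s + w) = E (x, s, w ^ 2) + w * O (x, s, w ^ 2) := by
  obtain ⟨k, hk, hk1, hk2, hb⟩ := gse_kernel
  let F : ℂ → ℂ := fun z => (g (z.re, z.im) : ℂ)
  have hF : ContDiff ℝ (⊤ : ℕ∞) F :=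
    Complex.ofRealCLM.contDiff.comp (hg.comp (Complex.reCLM.contDiff.prodMk Complex.imCLM.contDiff))
  have hFc : HasCompactSupport F := by
    have h1 : HasCompactSupport (fun z : ℂ => g (Complex.equivRealProdCLM z)) :=
      hc.comp_homeomorph Complex.equivRealProdCLM.toHomeomorph
    exact h1.comp_left (g := fun r : ℝ => (r : ℂ)) Complex.ofReal_zero
  let S : SchwartzMap ℂ ℂ := hFc.toSchwartzMap hF
  let G : ℂ → ℂ := fun ξ => (𝓕 S) ξ
  have hG : Rapid G := ⟨(𝓕 S).continuous, fun n => (𝓕 S).integrable_pow_mul volume n⟩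
  have hinv : ∀ z, F z = ∫ ξ : ℂ, Complex.exp ((↑(2 * Real.pi * (ξ.re * z.re + ξ.im * z.im)) * Complex.I)) * G ξ := by
    intro z
    have h := congrFun (S.continuous.fourierInv_fourier_eq S.integrable (𝓕 S).integrable) z
    rw [Real.fourierInv_eq'] at h
    have h' : S z = F z := rfl
    rw [← h', ← h]
    refine integral_congr_ae (Eventually.of_forall fun ξ => ?_)
    simp only [smul_eq_mul]
    congr 4
    simp [Complex.inner, Complex.mul_re]
    ring
  let G' : ℂ → ℂ := fun ξ => (-2) * gseG2 G ξ
  have hG' : Rapid G' := hG.G2.mul continuous_const 2 0 (by simp)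
  refine ⟨fun p => (gseI k G 0 p).re, fun p => (gseI k G' 1 p).re,
    Complex.reCLM.contDiff.comp (gseI_smooth hk hb hG 0), Complex.reCLM.contDiff.comp (gseI_smooth hk hb hG' 1), ?_⟩
  intro x s w
  have main : F ⟨x, s + w⟩ = gseI k G 0 (x, s, w ^ 2) + (w : ℂ) * gseI k G' 1 (x, s, w ^ 2) := by
    rw [hinv]
    unfold gseI
    rw [← integral_const_mul, ← integral_add (gseT_int hk hb hG 0 _) ((gseT_int hk hb hG' 1 _).const_mul _)]
    refine integral_congr_ae (Eventually.of_forall fun ξ => ?_)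
    simp only [gseT, G', gseG2, iteratedDeriv_zero, iteratedDeriv_one]
    have c1 := hk1 (2 * Real.pi * ξ.im * w)
    have c2 := hk2 (2 * Real.pi * ξ.im * w)
    rw [mul_pow] at c1 c2
    rw [c1]
    have c3 : ((2 * (2 * Real.pi * ξ.im * w) * deriv k ((2 * Real.pi * ξ.im) ^ 2 * w ^ 2) : ℝ) : ℂ) = ((-Real.sin (2 * Real.pi * ξ.im * w) : ℝ) : ℂ) := by rw [c2]
    have c4 : Complex.exp (((2 * Real.pi * (ξ.re * x + ξ.im * (s + w)) : ℝ) : ℂ) * Complex.I) =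
      Complex.exp (((2 * Real.pi * (ξ.re * x + ξ.im * s) : ℝ) : ℂ) * Complex.I) *
        ((Real.cos (2 * Real.pi * ξ.im * w) : ℝ) + (Real.sin (2 * Real.pi * ξ.im * w) : ℝ) * Complex.I) := by
      rw [Complex.ofReal_cos, Complex.ofReal_sin, ← Complex.exp_mul_I, ← Complex.exp_add]
      congr 1
      push_cast
      ring
    rw [c4]
    push_cast at c3 ⊢
    linear_combination (Complex.exp (2 * Real.pi * (ξ.re * x + ξ.im * s) * Complex.I) * G ξ * Complex.I) * c3
  have := congrArg Complex.re main
  simpa [F] using this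

end
end

section
open Filter Topology
noncomputable section

lemma LocDiff.mk1 {h : ℝ × ℝ → ℝ} (hh : ContDiff ℝ (⊤ : ℕ∞) h) (h0 : h 0 = 0) (hy : pdy h 0 ≠ 0) :
    LocDiff (fun p => (p.1, h p)) := by
  refine ⟨contDiff_fst.prodMk hh, by simp [h0], ?_⟩
  have hd : HasFDerivAt (fun p : ℝ × ℝ => (p.1, h p))
      ((ContinuousLinearMap.fst ℝ ℝ ℝ).prod (fderiv ℝ h 0)) 0 :=
    hasFDerivAt_fst.prodMk (gse_hasFDerivAt hh 0)
  rw [hd.fderiv]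
  constructor
  · intro u v huv
    have h1 : u.1 = v.1 := (Prod.ext_iff.1 huv).1
    have h2 : fderiv ℝ h 0 u = fderiv ℝ h 0 v := (Prod.ext_iff.1 huv).2
    rw [gse_fderiv_apply, gse_fderiv_apply, h1] at h2
    have : u.2 = v.2 := mul_right_cancel₀ hy (by linarith)
    exact Prod.ext h1 this
  · intro v
    refine ⟨(v.1, (v.2 - v.1 * pdx h 0) / pdy h 0), ?_⟩
    refine Prod.ext rfl ?_
    show fderiv ℝ h 0 _ = _
    rw [gse_fderiv_apply]
    field_simp
    ring

/-- partial derivative on ℝ³ -/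
def gseD (v : ℝ × ℝ × ℝ) (F : ℝ × ℝ × ℝ → ℝ) : ℝ × ℝ × ℝ → ℝ := fun p => fderiv ℝ F p v

lemma gseD_smooth {F : ℝ × ℝ × ℝ → ℝ} (hF : ContDiff ℝ (⊤ : ℕ∞) F) (v) :
    ContDiff ℝ (⊤ : ℕ∞) (gseD v F) :=
  ((contDiff_infty_iff_fderiv.1 hF).2).clm_apply contDiff_const

lemma gse_hasDerivAt3 {F : ℝ × ℝ × ℝ → ℝ} (hF : ContDiff ℝ (⊤ : ℕ∞) F) {a b c : ℝ → ℝ}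
    {a' b' c' r : ℝ} (ha : HasDerivAt a a' r) (hb : HasDerivAt b b' r) (hc : HasDerivAt c c' r) :
    HasDerivAt (fun r => F (a r, b r, c r))
      (a' * gseD (1, 0, 0) F (a r, b r, c r) + b' * gseD (0, 1, 0) F (a r, b r, c r)
        + c' * gseD (0, 0, 1) F (a r, b r, c r)) r := by
  have h := ((hF.differentiable gse_htop (a r, b r, c r)).hasFDerivAt).comp_hasDerivAt r
    (ha.prodMk (hb.prodMk hc))
  refine h.congr_deriv ?_
  have : (a', b', c') = a' • ((1 : ℝ), (0 : ℝ), (0 : ℝ)) + b' • ((0 : ℝ), (1 : ℝ), (0 : ℝ))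
      + c' • ((0 : ℝ), (0 : ℝ), (1 : ℝ)) := by
    ext <;> simp
  rw [this, map_add, map_add, map_smul, map_smul, map_smul]
  rfl

lemma gse_whit_deriv {H e o : ℝ → ℝ} (he : ContDiff ℝ (⊤ : ℕ∞) e) (ho : ContDiff ℝ (⊤ : ℕ∞) o)
    (h : ∀ w, H w = e (w ^ 2) + w * o (w ^ 2)) (w : ℝ) :
    deriv H w = (o (w ^ 2) + 2 * w ^ 2 * deriv o (w ^ 2)) + w * (2 * deriv e (w ^ 2)) := by
  have : H = fun w => e (w ^ 2) + w * o (w ^ 2) := funext h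
  rw [this]
  have h2 : HasDerivAt (fun w : ℝ => w ^ 2) (2 * w) w := by simpa using hasDerivAt_pow 2 w
  have h3 := ((he.differentiable gse_htop (w ^ 2)).hasDerivAt).comp w h2
  have h4 := ((ho.differentiable gse_htop (w ^ 2)).hasDerivAt).comp w h2
  have h5 := h3.add ((hasDerivAt_id w).mul h4)
  refine h5.deriv.trans ?_
  simp
  ring

lemma gse_whit_derivs {H e o : ℝ → ℝ} (he : ContDiff ℝ (⊤ : ℕ∞) e) (ho : ContDiff ℝ (⊤ : ℕ∞) o)
    (h : ∀ w, H w = e (w ^ 2) + w * o (w ^ 2)) :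
    deriv H 0 = o 0 ∧ deriv (deriv H) 0 = 2 * deriv e 0 ∧
      deriv (deriv (deriv H)) 0 = 6 * deriv o 0 := by
  have he1 : ContDiff ℝ (⊤ : ℕ∞) (deriv e) := (contDiff_infty_iff_deriv.1 he).2
  have ho1 : ContDiff ℝ (⊤ : ℕ∞) (deriv o) := (contDiff_infty_iff_deriv.1 ho).2
  have h1 := gse_whit_deriv he ho h
  have he2 : ContDiff ℝ (⊤ : ℕ∞) (fun u => o u + 2 * u * deriv o u) := by fun_prop
  have ho2 : ContDiff ℝ (⊤ : ℕ∞) (fun u => 2 * deriv e u) := by fun_prop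
  have h2 := gse_whit_deriv he2 ho2 h1
  have he3 : ContDiff ℝ (⊤ : ℕ∞) (fun u => 2 * deriv e u + 2 * u * deriv (fun u => 2 * deriv e u) u) := by
    have := (contDiff_infty_iff_deriv.1 ho2).2
    fun_prop
  have ho3 : ContDiff ℝ (⊤ : ℕ∞) (fun u => 2 * deriv (fun u => o u + 2 * u * deriv o u) u) := by
    have := (contDiff_infty_iff_deriv.1 he2).2
    fun_prop
  have h3 := gse_whit_deriv he3 ho3 h2
  refine ⟨by simpa using h1 0, by simpa using h2 0, ?_⟩
  have h4 : HasDerivAt (fun u => o u + 2 * u * deriv o u) (3 * deriv o 0) 0 := by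
    have a1 := (ho.differentiable gse_htop 0).hasDerivAt
    have a2 := (ho1.differentiable gse_htop 0).hasDerivAt
    refine (a1.add (((hasDerivAt_id (0:ℝ)).const_mul 2).mul a2)).congr_deriv ?_
    simp; ring
  have := h3 0
  rw [this]
  norm_num
  rw [h4.deriv]; ring

lemma gse_deriv_y {g : ℝ × ℝ → ℝ} (hg : ContDiff ℝ (⊤ : ℕ∞) g) (x s w : ℝ) :
    HasDerivAt (fun w => g (x, s + w)) (pdy g (x, s + w)) w := by
  have h := (gse_hasDerivAt_y hg x (s + w)).comp w ((hasDerivAt_id w).const_add s)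
  exact h.congr_deriv (by simp)

lemma gse_whit_base {g : ℝ × ℝ → ℝ} (hg : ContDiff ℝ (⊤ : ℕ∞) g) {E O : ℝ × ℝ × ℝ → ℝ}
    (hE : ContDiff ℝ (⊤ : ℕ∞) E) (hO : ContDiff ℝ (⊤ : ℕ∞) O)
    (h : ∀ x s w, g (x, s + w) = E (x, s, w ^ 2) + w * O (x, s, w ^ 2)) (x s : ℝ) :
    O (x, s, 0) = pdy g (x, s) ∧ 2 * gseD (0, 0, 1) E (x, s, 0) = pdy (pdy g) (x, s) ∧
      6 * gseD (0, 0, 1) O (x, s, 0) = pdy (pdy (pdy g)) (x, s) := by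
  have he : ContDiff ℝ (⊤ : ℕ∞) (fun u => E (x, s, u)) := by fun_prop
  have ho : ContDiff ℝ (⊤ : ℕ∞) (fun u => O (x, s, u)) := by fun_prop
  have key := gse_whit_derivs (H := fun w => g (x, s + w)) he ho (h x s)
  have d1 : deriv (fun w => g (x, s + w)) = fun w => pdy g (x, s + w) :=
    funext fun w => (gse_deriv_y hg x s w).deriv
  have d2 : deriv (fun w => pdy g (x, s + w)) = fun w => pdy (pdy g) (x, s + w) :=
    funext fun w => (gse_deriv_y (pdy_smooth hg) x s w).deriv
  have d3 : deriv (fun w => pdy (pdy g) (x, s + w)) = fun w => pdy (pdy (pdy g)) (x, s + w) :=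
    funext fun w => (gse_deriv_y (pdy_smooth (pdy_smooth hg)) x s w).deriv
  have e1 : deriv (fun u => E (x, s, u)) 0 = gseD (0, 0, 1) E (x, s, 0) := by
    have := gse_hasDerivAt3 hE (hasDerivAt_const (0:ℝ) x) (hasDerivAt_const (0:ℝ) s) (hasDerivAt_id (0:ℝ))
    simpa using this.deriv
  have e2 : deriv (fun u => O (x, s, u)) 0 = gseD (0, 0, 1) O (x, s, 0) := by
    have := gse_hasDerivAt3 hO (hasDerivAt_const (0:ℝ) x) (hasDerivAt_const (0:ℝ) s) (hasDerivAt_id (0:ℝ))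
    simpa using this.deriv
  rw [d1, d2, d3, e1, e2] at key
  simp only [add_zero] at key
  exact ⟨key.1.symm, key.2.1.symm, key.2.2.symm⟩

lemma gse_prep_st {g : ℝ × ℝ → ℝ} (hg : ContDiff ℝ (⊤ : ℕ∞) g) {E O : ℝ × ℝ × ℝ → ℝ}
    (hE : ContDiff ℝ (⊤ : ℕ∞) E) (hO : ContDiff ℝ (⊤ : ℕ∞) O)
    (h : ∀ x s w, g (x, s + w) = E (x, s, w ^ 2) + w * O (x, s, w ^ 2))
    (g1 : pdy g 0 = 0) (g2 : pdy (pdy g) 0 = 0) (g3 : pdy (pdy (pdy g)) 0 = 6) :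
    ∃ s t : ℝ → ℝ, ContDiff ℝ (⊤ : ℕ∞) s ∧ ContDiff ℝ (⊤ : ℕ∞) t ∧ s 0 = 0 ∧ t 0 = 0 ∧
      ∀ᶠ x in 𝓝 0, gseD (0, 0, 1) E (x, s x, - t x) = 0 ∧
        O (x, s x, - t x) = 2 * t x * gseD (0, 0, 1) O (x, s x, - t x) := by
  have hEu := gseD_smooth hE (0, 0, 1)
  have hOu := gseD_smooth hO (0, 0, 1)
  have base := gse_whit_base hg hE hO h
  set Eu := gseD (0, 0, 1) E with hEudef
  set Ou := gseD (0, 0, 1) O with hOudef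
  obtain ⟨b1, b2, b3⟩ := base 0 0
  replace b1 : O (0, 0, 0) = pdy g 0 := b1
  replace b2 : 2 * Eu (0, 0, 0) = pdy (pdy g) 0 := b2
  replace b3 : 6 * Ou (0, 0, 0) = pdy (pdy (pdy g)) 0 := b3
  have hOu0 : Ou (0, 0, 0) = 1 := by linarith
  have hO0 : O (0, 0, 0) = 0 := by linarith
  have hEu0 : Eu (0, 0, 0) = 0 := by linarith
  have hEus : gseD (0, 1, 0) Eu (0, 0, 0) = 3 := by
    have a1 := gse_hasDerivAt3 hEu (hasDerivAt_const (0:ℝ) (0:ℝ)) (hasDerivAt_id (0:ℝ)) (hasDerivAt_const (0:ℝ) (0:ℝ))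
    have a2 := (gse_hasDerivAt_y (pdy_smooth (pdy_smooth hg)) 0 0)
    have a3 : (fun s => Eu (0, s, 0)) = fun s => pdy (pdy g) (0, s) / 2 := by
      funext s; have := (base 0 s).2.1; linarith
    have a4 := a1.unique (a3 ▸ a2.div_const 2 : HasDerivAt (fun s => Eu (0, s, 0)) _ 0)
    rw [show ((0:ℝ), (0:ℝ)) = 0 from rfl, g3] at a4
    simp at a4
    linarith
  have hOs : gseD (0, 1, 0) O (0, 0, 0) = 0 := by
    have a1 := gse_hasDerivAt3 hO (hasDerivAt_const (0:ℝ) (0:ℝ)) (hasDerivAt_id (0:ℝ)) (hasDerivAt_const (0:ℝ) (0:ℝ))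
    have a2 := (gse_hasDerivAt_y (pdy_smooth hg) 0 0)
    have a3 : (fun s => O (0, s, 0)) = fun s => pdy g (0, s) := by
      funext s; exact (base 0 s).1
    have a4 := a1.unique (a3 ▸ a2 : HasDerivAt (fun s => O (0, s, 0)) _ 0)
    rw [show ((0:ℝ), (0:ℝ)) = 0 from rfl, g2] at a4
    simpa using a4
  let H : ℝ × (ℝ × ℝ) → ℝ × ℝ := fun p =>
    (Eu (p.1, p.2.1, - p.2.2), O (p.1, p.2.1, - p.2.2) - 2 * p.2.2 * Ou (p.1, p.2.1, - p.2.2))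
  have hH : ContDiff ℝ (⊤ : ℕ∞) H := by
    fun_prop
  obtain ⟨σ, hσ, hσ0, hσe⟩ := gse_implicit H 0 hH (by simp [H, hEu0, hO0]) (by
    intro v hv
    have l1 : HasDerivAt (fun r : ℝ => ((0:ℝ), r • v)) ((0:ℝ), v) 0 := by
      have := (hasDerivAt_const (0:ℝ) (0:ℝ)).prodMk ((hasDerivAt_id (0:ℝ)).smul_const v)
      simpa using this
    have l2 := HasFDerivAt.comp_hasDerivAt_of_eq (0:ℝ) (hH.differentiable gse_htop (0, 0)).hasFDerivAt l1 (by simp)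
    rw [hv] at l2
    have m1 : HasDerivAt (fun r : ℝ => r * v.1) v.1 0 := by simpa using (hasDerivAt_id (0:ℝ)).mul_const v.1
    have m2 : HasDerivAt (fun r : ℝ => r * v.2) v.2 0 := by simpa using (hasDerivAt_id (0:ℝ)).mul_const v.2
    have k1 := gse_hasDerivAt3 hEu (hasDerivAt_const (0:ℝ) (0:ℝ)) m1 m2.neg
    have k2 := gse_hasDerivAt3 hO (hasDerivAt_const (0:ℝ) (0:ℝ)) m1 m2.neg
    have k3 := gse_hasDerivAt3 hOu (hasDerivAt_const (0:ℝ) (0:ℝ)) m1 m2.neg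
    have k4 := k1.prodMk (k2.sub ((m2.const_mul 2).mul k3))
    have k5 := l2.unique k4
    have k6 := (Prod.ext_iff.1 k5).1
    have k7 := (Prod.ext_iff.1 k5).2
    simp [← hOudef, hEus, hOs, hOu0] at k6 k7
    have v2 : v.2 = 0 := by linarith
    have v1 : v.1 = 0 := by rw [v2] at k6; linarith
    exact Prod.ext v1 v2)
  refine ⟨fun x => (σ x).1, fun x => (σ x).2, hσ.fst, hσ.snd, by simp [hσ0], by simp [hσ0], ?_⟩
  filter_upwards [hσe] with x hx
  have q1 := (Prod.ext_iff.1 hx).1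
  have q2 := (Prod.ext_iff.1 hx).2
  simp [H] at q1 q2
  exact ⟨q1, by linarith⟩

end
end

section
open Filter Topology
noncomputable section

lemma gse_prep_q {g : ℝ × ℝ → ℝ} (hg : ContDiff ℝ (⊤ : ℕ∞) g) {E O : ℝ × ℝ × ℝ → ℝ}
    (hE : ContDiff ℝ (⊤ : ℕ∞) E) (hO : ContDiff ℝ (⊤ : ℕ∞) O)
    (h : ∀ x s w, g (x, s + w) = E (x, s, w ^ 2) + w * O (x, s, w ^ 2))
    (g1 : pdy g 0 = 0) (g2 : pdy (pdy g) 0 = 0) (g3 : pdy (pdy (pdy g)) 0 = 6) :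
    ∃ s t e q : ℝ → ℝ, ∃ R : ℝ × ℝ → ℝ, ContDiff ℝ (⊤ : ℕ∞) s ∧ ContDiff ℝ (⊤ : ℕ∞) t ∧
      ContDiff ℝ (⊤ : ℕ∞) e ∧ ContDiff ℝ (⊤ : ℕ∞) q ∧ ContDiff ℝ (⊤ : ℕ∞) R ∧
      s 0 = 0 ∧ t 0 = 0 ∧ q 0 = 1 ∧
      ∀ᶠ x in 𝓝 (0:ℝ), ∀ w, g (x, s x + w) =
        e x + q x * (w ^ 3 + 3 * t x * w) + (w ^ 2 + t x) ^ 2 * R (x, w) := by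
  obtain ⟨s, t, hs, ht, s0, t0, hst⟩ := gse_prep_st hg hE hO h g1 g2 g3
  have hOu := gseD_smooth hO (0, 0, 1)
  have main : ∀ F : ℝ × ℝ × ℝ → ℝ, ContDiff ℝ (⊤ : ℕ∞) F → ∃ R : ℝ × ℝ → ℝ, ContDiff ℝ (⊤ : ℕ∞) R ∧
      ∀ x v, F (x, s x, v - t x) = F (x, s x, - t x) + v * gseD (0, 0, 1) F (x, s x, - t x)
        + v ^ 2 * R (x, v) := by
    intro F hF
    have hK : ContDiff ℝ (⊤ : ℕ∞) (fun p : ℝ × ℝ => F (p.1, s p.1, p.2 - t p.1)) := by fun_prop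
    obtain ⟨R, hR, hRe⟩ := gse_taylor 2 _ hK
    refine ⟨R, hR, fun x v => ?_⟩
    have k1 := gse_hasDerivAt_y hK x 0
    have k2 := gse_hasDerivAt3 hF (hasDerivAt_const (0:ℝ) x) (hasDerivAt_const (0:ℝ) (s x))
      ((hasDerivAt_id (0:ℝ)).sub_const (t x))
    have k3 := k1.unique k2
    have := hRe x v
    simp [Finset.sum_range_succ] at this
    rw [this, k3]
    simp
  obtain ⟨R1, hR1, e1⟩ := main E hE
  obtain ⟨R2, hR2, e2⟩ := main O hO
  refine ⟨s, t, fun x => E (x, s x, - t x), fun x => gseD (0, 0, 1) O (x, s x, - t x),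
    fun p => R1 (p.1, p.2 ^ 2 + t p.1) + p.2 * R2 (p.1, p.2 ^ 2 + t p.1), hs, ht, by fun_prop, by fun_prop,
    by fun_prop, s0, t0, ?_, ?_⟩
  · have b3 := (gse_whit_base hg hE hO h 0 0).2.2
    replace b3 : 6 * gseD (0, 0, 1) O (0, 0, 0) = pdy (pdy (pdy g)) 0 := b3
    simp only [s0, t0, neg_zero]
    linarith
  · filter_upwards [hst] with x hx w
    have a1 := e1 x (w ^ 2 + t x)
    have a2 := e2 x (w ^ 2 + t x)
    rw [add_sub_cancel_right] at a1 a2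
    rw [h, a1, a2, hx.1, hx.2]
    ring

lemma gse_prep_c {g : ℝ × ℝ → ℝ} (hg : ContDiff ℝ (⊤ : ℕ∞) g) (hc : HasCompactSupport g)
    (g0 : g 0 = 0)
    (g1 : pdy g 0 = 0) (g2 : pdy (pdy g) 0 = 0) (g3 : pdy (pdy (pdy g)) 0 = 6) :
    ∃ a : ℝ → ℝ, ContDiff ℝ (⊤ : ℕ∞) a ∧ a 0 = 0 ∧
      AEquiv (fun p => (p.1, g p)) (fun p => (p.1, p.2 ^ 3 + a p.1 * p.2)) := by
  obtain ⟨E, O, hE, hO, h⟩ := gse_whitney g hg hc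
  obtain ⟨s, t, e, q, R, hs, ht, he, hq, hR, s0, t0, q0, hev⟩ := gse_prep_q hg hE hO h g1 g2 g3
  let H : (ℝ × ℝ) × ℝ → ℝ := fun p =>
    q p.1.1 * (3 * p.2 + 3 * p.1.2 * p.2 ^ 2 + (p.1.2 ^ 2 + t p.1.1) * p.2 ^ 3) - R p.1
  have hH : ContDiff ℝ (⊤ : ℕ∞) H := by fun_prop
  obtain ⟨S, hS, hS0, hSe⟩ := gse_implicit H (R 0 / 3) hH (by simp [H, q0, t0]; ring) (by
    intro v hv
    have l1 : HasDerivAt (fun r : ℝ => ((0:ℝ × ℝ), R 0 / 3 + r * v)) (0, v) 0 := by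
      have := (hasDerivAt_const (0:ℝ) (0:ℝ × ℝ)).prodMk (((hasDerivAt_id (0:ℝ)).mul_const v).const_add (R 0 / 3))
      simpa using this
    have l2 := HasFDerivAt.comp_hasDerivAt_of_eq (0:ℝ) (hH.differentiable gse_htop (0, R 0 / 3)).hasFDerivAt l1 (by simp)
    rw [hv] at l2
    have l3 : (H ∘ fun r : ℝ => ((0:ℝ × ℝ), R 0 / 3 + r * v)) = fun r => r * (3 * v) := by
      funext r
      simp [H, q0, t0]; ring
    rw [l3] at l2
    have := l2.unique ((hasDerivAt_id (0:ℝ)).mul_const (3 * v))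
    simpa using this)
  have hY : ContDiff ℝ (⊤ : ℕ∞) (fun p : ℝ × ℝ => p.2 + (p.2 ^ 2 + t p.1) * S p) := by fun_prop
  refine ⟨fun x => 3 * t x, by fun_prop, by simp [t0], ?_⟩
  have hP : LocDiff (fun p => (p.1, s p.1 + p.2)) := by
    have hh : ContDiff ℝ (⊤ : ℕ∞) (fun p : ℝ × ℝ => s p.1 + p.2) := by fun_prop
    refine LocDiff.mk1 hh (by simp [s0]) ?_
    have := (gse_hasDerivAt_y hh 0 0).unique ((hasDerivAt_id (0:ℝ)).const_add (s 0))
    rw [show (0 : ℝ × ℝ) = (0, 0) from rfl, this]; exact one_ne_zero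
  have e0 : e 0 = 0 := by
    have := hev.self_of_nhds 0
    simp [s0, t0] at this
    rw [← this]; exact g0
  have hA : LocDiff (fun p => (p.1, e p.1 + q p.1 * p.2)) := by
    have hh : ContDiff ℝ (⊤ : ℕ∞) (fun p : ℝ × ℝ => e p.1 + q p.1 * p.2) := by fun_prop
    refine LocDiff.mk1 hh (by simp [e0]) ?_
    have := (gse_hasDerivAt_y hh 0 0).unique (((hasDerivAt_id (0:ℝ)).const_mul (q 0)).const_add (e 0))
    rw [show (0 : ℝ × ℝ) = (0, 0) from rfl, this, q0]; simp
  have hQ : LocDiff (fun p => (p.1, p.2 + (p.2 ^ 2 + t p.1) * S p)) := by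
    refine LocDiff.mk1 hY (by simp [t0]) ?_
    have h2 : HasDerivAt (fun w : ℝ => w ^ 2 + t 0) 0 0 := by
      simpa using (hasDerivAt_pow 2 (0:ℝ)).add_const (t 0)
    have := (gse_hasDerivAt_y hY 0 0).unique ((hasDerivAt_id (0:ℝ)).add (h2.mul (gse_hasDerivAt_y hS 0 0)))
    rw [show (0 : ℝ × ℝ) = (0, 0) from rfl, this]; simp [t0]
  refine AEquiv.of_rel hP hA hQ ?_ ?_
  · have hcont : Continuous (fun p : ℝ × ℝ => (p.1, p.2 ^ 3 + 3 * t p.1 * p.2)) := by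
      have := ht.continuous
      fun_prop
    have := hcont.tendsto 0
    simp at this
    exact this
  · have hev' : ∀ᶠ p : ℝ × ℝ in 𝓝 0, ∀ w, g (p.1, s p.1 + w) =
        e p.1 + q p.1 * (w ^ 3 + 3 * t p.1 * w) + (w ^ 2 + t p.1) ^ 2 * R (p.1, w) :=
      (continuous_fst.tendsto (0 : ℝ × ℝ)).eventually hev
    filter_upwards [hev', hSe] with p hp hp2
    refine Prod.ext rfl ?_
    simp only
    rw [hp p.2]
    simp only [H] at hp2
    linear_combination (-(p.2 ^ 2 + t p.1) ^ 2) * hp2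

lemma gse_congr_pdy {g k : ℝ × ℝ → ℝ} {p : ℝ × ℝ} (h : g =ᶠ[𝓝 p] k) : pdy g =ᶠ[𝓝 p] pdy k := by
  have := h.fderiv (𝕜 := ℝ)
  filter_upwards [this] with x hx
  simp [pdy, dop, hx]

lemma gse_prep {g : ℝ × ℝ → ℝ} (hg : ContDiff ℝ (⊤ : ℕ∞) g)
    (g0 : g 0 = 0)
    (g1 : pdy g 0 = 0) (g2 : pdy (pdy g) 0 = 0) (g3 : pdy (pdy (pdy g)) 0 = 6) :
    ∃ a : ℝ → ℝ, ContDiff ℝ (⊤ : ℕ∞) a ∧ a 0 = 0 ∧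
      AEquiv (fun p => (p.1, g p)) (fun p => (p.1, p.2 ^ 3 + a p.1 * p.2)) := by
  let b : ContDiffBump (0 : ℝ × ℝ) := ⟨1, 2, by norm_num, by norm_num⟩
  have hb : ContDiff ℝ (⊤ : ℕ∞) b := b.contDiff
  have hgt : ContDiff ℝ (⊤ : ℕ∞) (fun p => b p * g p) := hb.mul hg
  have hc : HasCompactSupport (fun p => b p * g p) := b.hasCompactSupport.mul_right
  have heq : (fun p => b p * g p) =ᶠ[𝓝 0] g := by
    filter_upwards [b.eventuallyEq_one] with p hp
    simp [hp]
  have h1 := gse_congr_pdy heq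
  have h2 := gse_congr_pdy h1
  have h3 := gse_congr_pdy h2
  obtain ⟨a, ha, ha0, hae⟩ := gse_prep_c hgt hc (heq.self_of_nhds.trans g0) (h1.self_of_nhds.trans g1)
    (h2.self_of_nhds.trans g2) (h3.self_of_nhds.trans g3)
  refine ⟨a, ha, ha0, ?_⟩
  obtain ⟨φ, ψ, p1, p2, p3, p4, p5, p6, p7⟩ := hae
  refine ⟨φ, ψ, p1, p2, p3, p4, p5, p6, ?_⟩
  have ht : Tendsto φ (𝓝 0) (𝓝 0) := by simpa [p3] using p1.continuous.tendsto 0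
  filter_upwards [p7, ht.eventually heq] with p hp hq
  rw [← hp, hq]

end
end

section
open Filter Topology
noncomputable section

lemma gse_cancel {b : ℝ → ℝ} (hb : Continuous b) {k : ℕ}
    (h : (fun x => x * b x) =O[𝓝 0] fun x : ℝ => x ^ (k + 1)) : b =O[𝓝 0] fun x : ℝ => x ^ k := by
  obtain ⟨C, hC⟩ := h.bound
  refine Asymptotics.IsBigO.of_bound C ?_
  have h1 : ∀ᶠ x in 𝓝[≠] (0:ℝ), ‖b x‖ ≤ C * ‖x ^ k‖ := by
    filter_upwards [hC.filter_mono nhdsWithin_le_nhds, self_mem_nhdsWithin] with x hx hx0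
    have hx0' : 0 < ‖x‖ := norm_pos_iff.2 hx0
    rw [norm_mul, pow_succ, norm_mul] at hx
    have : ‖x‖ * ‖b x‖ ≤ ‖x‖ * (C * ‖x ^ k‖) := by linarith
    exact le_of_mul_le_mul_left this hx0'
  have h2 : ‖b 0‖ ≤ C * ‖(0:ℝ) ^ k‖ := by
    refine le_of_tendsto_of_tendsto (b := 𝓝[≠] (0:ℝ)) ?_ ?_ h1
    · exact (hb.norm.tendsto 0).mono_left nhdsWithin_le_nhds
    · exact ((by fun_prop : Continuous fun x : ℝ => C * ‖x ^ k‖).tendsto 0).mono_left nhdsWithin_le_nhds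
  rw [eventually_nhdsWithin_iff] at h1
  filter_upwards [h1] with x hx
  by_cases hx0 : x = 0
  · rw [hx0]; exact h2
  · exact hx hx0

lemma gse_factor (k : ℕ) : ∀ (a : ℝ → ℝ), ContDiff ℝ (⊤ : ℕ∞) a → a =O[𝓝 0] (fun x : ℝ => x ^ k) →
    ∃ u : ℝ → ℝ, ContDiff ℝ (⊤ : ℕ∞) u ∧ ∀ x, a x = x ^ k * u x := by
  induction k with
  | zero => intro a ha _; exact ⟨a, ha, fun x => by simp⟩
  | succ k ih =>
    intro a ha hO
    have hH : ContDiff ℝ (⊤ : ℕ∞) (fun p : ℝ × ℝ => a p.2) := by fun_prop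
    obtain ⟨R, hR, he⟩ := gse_taylor 1 _ hH
    have a0 : a 0 = 0 := by
      obtain ⟨C, hC⟩ := hO.bound
      have := hC.self_of_nhds
      simpa using this
    have he' : ∀ y, a y = y * R (0, y) := by
      intro y
      have := he 0 y
      simpa [a0] using this
    have hb : ContDiff ℝ (⊤ : ℕ∞) (fun y => R (0, y)) := by fun_prop
    have hO' := hO.congr_left he'
    obtain ⟨u, hu, hue⟩ := ih _ hb (gse_cancel hb.continuous hO')
    exact ⟨u, hu, fun x => by rw [he', hue]; ring⟩

lemma LocDiff.mk2 {ξ : ℝ → ℝ} (hξ : ContDiff ℝ (⊤ : ℕ∞) ξ) (h0 : ξ 0 = 0) {d : ℝ}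
    (hd : HasDerivAt ξ d 0) (hd0 : d ≠ 0) : LocDiff (fun p => (ξ p.1, p.2)) := by
  refine ⟨by fun_prop, by simp [h0], ?_⟩
  have h1 : HasFDerivAt (fun p : ℝ × ℝ => ξ p.1) (d • ContinuousLinearMap.fst ℝ ℝ ℝ) 0 :=
    HasDerivAt.comp_hasFDerivAt (0 : ℝ × ℝ) (h₂ := ξ) hd hasFDerivAt_fst
  have h2 := h1.prodMk (hasFDerivAt_snd (𝕜 := ℝ) (p := (0 : ℝ × ℝ)))
  rw [h2.fderiv]
  constructor
  · intro u v huv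
    have q1 := (Prod.ext_iff.1 huv).1
    have q2 := (Prod.ext_iff.1 huv).2
    simp [hd0] at q1 q2
    exact Prod.ext q1 q2
  · intro v
    exact ⟨(v.1 / d, v.2), by simp [mul_div_cancel₀ _ hd0]⟩

lemma gse_model_tendsto {a : ℝ → ℝ} (ha : Continuous a) :
    Tendsto (fun p : ℝ × ℝ => (p.1, p.2 ^ 3 + a p.1 * p.2)) (𝓝 0) (𝓝 0) := by
  have hcont : Continuous (fun p : ℝ × ℝ => (p.1, p.2 ^ 3 + a p.1 * p.2)) := by fun_prop
  have := hcont.tendsto 0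
  simp at this
  exact this

lemma gse_normal {u : ℝ → ℝ} (hu : ContDiff ℝ (⊤ : ℕ∞) u) {k : ℕ} (hk : 1 ≤ k) {ε v0 : ℝ}
    (hε : ε ≠ 0) (hv0 : v0 ≠ 0) (h : ε * v0 ^ k = u 0) :
    AEquiv (fun p => (p.1, p.2 ^ 3 + (p.1 ^ k * u p.1) * p.2))
      (fun p => (p.1, p.2 ^ 3 + ε * p.1 ^ k * p.2)) := by
  let H : ℝ × ℝ → ℝ := fun p => ε * p.2 ^ k - u p.1
  have hH : ContDiff ℝ (⊤ : ℕ∞) H := by fun_prop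
  obtain ⟨v, hv, hv00, hve⟩ := gse_implicit H v0 hH (by simp [H, h]) (by
    intro w hw
    rw [gse_fderiv_apply] at hw
    have := (gse_hasDerivAt_y hH 0 v0).unique (((hasDerivAt_pow k v0).const_mul ε).sub_const (u 0))
    rw [this] at hw
    simp at hw
    rcases hw with hw | hw
    · exact hw
    · rcases hw with hw | hw | hw
      · exact absurd hw hε
      · omega
      · exact absurd hw.1 hv0)
  have hξ : ContDiff ℝ (⊤ : ℕ∞) (fun x => x * v x) := by fun_prop
  have hd : HasDerivAt (fun x => x * v x) v0 0 := by
    have := (hasDerivAt_id (0:ℝ)).mul (hv.differentiable gse_htop 0).hasDerivAt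
    refine this.congr_deriv (by simp [hv00])
  have hQ := LocDiff.mk2 hξ (by simp) hd hv0
  have hu' := hu.continuous
  have t1 := gse_model_tendsto (a := fun x => x ^ k * u x) (by fun_prop)
  have t2 := gse_model_tendsto (a := fun x => ε * x ^ k) (by fun_prop)
  refine AEquiv.symm' t2 (AEquiv.of_rel hQ hQ LocDiff.id t1 ?_)
  have hve' : ∀ᶠ p : ℝ × ℝ in 𝓝 0, H (p.1, v p.1) = 0 :=
    (continuous_fst.tendsto (0 : ℝ × ℝ)).eventually hve
  filter_upwards [hve'] with p hp
  refine Prod.ext rfl ?_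
  simp only [H] at hp ⊢
  rw [mul_pow]
  linear_combination (p.1 ^ k * p.2) * hp

end
end

section
open Filter Topology
noncomputable section

def GInv (g : ℝ × ℝ → ℝ) (k : ℕ) : Prop :=
  ∃ δ : ℝ → ℝ × ℝ, ContDiff ℝ (⊤ : ℕ∞) δ ∧ δ 0 = 0 ∧ deriv δ 0 ≠ 0 ∧
    (fun τ => pdy g (δ τ)) =O[𝓝 0] (fun τ : ℝ => τ ^ k) ∧
    (fun τ => pdy (pdy g) (δ τ)) =O[𝓝 0] (fun τ : ℝ => τ ^ k)

lemma gse_pdy_comp {F a b : ℝ × ℝ → ℝ} (hF : ContDiff ℝ (⊤ : ℕ∞) F) (ha : ContDiff ℝ (⊤ : ℕ∞) a)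
    (hb : ContDiff ℝ (⊤ : ℕ∞) b) :
    pdy (fun p => F (a p, b p)) = fun p => pdx F (a p, b p) * pdy a p + pdy F (a p, b p) * pdy b p := by
  funext ⟨x, y⟩
  have hc : ContDiff ℝ (⊤ : ℕ∞) (fun p => F (a p, b p)) := by fun_prop
  have h1 := gse_hasDerivAt_y hc x y
  have h2 := (gse_hasFDerivAt hF (a (x, y), b (x, y))).comp_hasDerivAt y
    ((gse_hasDerivAt_y ha x y).prodMk (gse_hasDerivAt_y hb x y))
  rw [h1.unique h2, gse_fderiv_apply]
  ring

lemma gse_pdy_mul {a b : ℝ × ℝ → ℝ} (ha : ContDiff ℝ (⊤ : ℕ∞) a)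
    (hb : ContDiff ℝ (⊤ : ℕ∞) b) :
    pdy (fun p => a p * b p) = fun p => pdy a p * b p + a p * pdy b p := by
  funext ⟨x, y⟩
  have hc : ContDiff ℝ (⊤ : ℕ∞) (fun p => a p * b p) := by fun_prop
  exact (gse_hasDerivAt_y hc x y).unique ((gse_hasDerivAt_y ha x y).mul (gse_hasDerivAt_y hb x y))

lemma gse_pdy_add {a b : ℝ × ℝ → ℝ} (ha : ContDiff ℝ (⊤ : ℕ∞) a)
    (hb : ContDiff ℝ (⊤ : ℕ∞) b) :
    pdy (fun p => a p + b p) = fun p => pdy a p + pdy b p := by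
  funext ⟨x, y⟩
  have hc : ContDiff ℝ (⊤ : ℕ∞) (fun p => a p + b p) := by fun_prop
  exact (gse_hasDerivAt_y hc x y).unique ((gse_hasDerivAt_y ha x y).add (gse_hasDerivAt_y hb x y))

lemma gse_pdy_fst : pdy (fun p : ℝ × ℝ => p.1) = fun _ => 0 := by
  funext ⟨x, y⟩
  exact (gse_hasDerivAt_y (g := fun p : ℝ × ℝ => p.1) contDiff_fst x y).unique (hasDerivAt_const y x)

lemma gse_rel {g h A B a b : ℝ × ℝ → ℝ} (hg : ContDiff ℝ (⊤ : ℕ∞) g) (hh : ContDiff ℝ (⊤ : ℕ∞) h)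
    (hA : ContDiff ℝ (⊤ : ℕ∞) A) (hB : ContDiff ℝ (⊤ : ℕ∞) B)
    (ha : ContDiff ℝ (⊤ : ℕ∞) a) (hb : ContDiff ℝ (⊤ : ℕ∞) b)
    (h1 : ∀ᶠ p in 𝓝 (0 : ℝ × ℝ), a p = A (p.1, h p))
    (h2 : ∀ᶠ p in 𝓝 (0 : ℝ × ℝ), g (a p, b p) = B (p.1, h p)) :
    ∃ K J L1 L2 L3 : ℝ × ℝ → ℝ, Continuous K ∧ Continuous J ∧ Continuous L1 ∧ Continuous L2 ∧ Continuous L3 ∧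
      ∀ᶠ p in 𝓝 (0 : ℝ × ℝ), pdy a p = J p * pdy h p ∧ pdy g (a p, b p) * pdy b p = K p * pdy h p ∧
        pdy (pdy g) (a p, b p) * pdy b p ^ 2 = L1 p * pdy h p + L2 p * pdy (pdy h) p + L3 p * pdy g (a p, b p) := by
  have hgx := pdx_smooth hg
  have hgy := pdy_smooth hg
  have hgxy := pdx_smooth hgy
  have hgyy := pdy_smooth hgy
  have hay := pdy_smooth ha
  have hby := pdy_smooth hb
  have hbyy := pdy_smooth hby
  have hAy := pdy_smooth hA
  have hAyy := pdy_smooth hAy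
  have hBy := pdy_smooth hB
  have hByy := pdy_smooth hBy
  have hhy := pdy_smooth hh
  have hhyy := pdy_smooth hhy
  -- first derivative of F(x,h)
  have one : ∀ F : ℝ × ℝ → ℝ, ContDiff ℝ (⊤ : ℕ∞) F →
      pdy (fun p => F (p.1, h p)) = fun p => pdy F (p.1, h p) * pdy h p := by
    intro F hF
    rw [gse_pdy_comp (a := fun p => p.1) hF contDiff_fst hh, gse_pdy_fst]
    simp
  have two : ∀ F : ℝ × ℝ → ℝ, ContDiff ℝ (⊤ : ℕ∞) F →
      pdy (pdy (fun p => F (p.1, h p))) = fun p => pdy (pdy F) (p.1, h p) * pdy h p * pdy h p +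
        pdy F (p.1, h p) * pdy (pdy h) p := by
    intro F hF
    have hFy := pdy_smooth hF
    rw [one F hF, gse_pdy_mul (by fun_prop) hhy, one _ hFy]
  have a1 := gse_congr_pdy h1
  have a2 := gse_congr_pdy a1
  have b1 := gse_congr_pdy h2
  have b2 := gse_congr_pdy b1
  rw [one A hA] at a1
  rw [two A hA] at a2
  rw [one B hB, gse_pdy_comp hg ha hb] at b1
  have hgab : ContDiff ℝ (⊤ : ℕ∞) (fun p => pdx g (a p, b p)) := by fun_prop
  have hgab' : ContDiff ℝ (⊤ : ℕ∞) (fun p => pdy g (a p, b p)) := by fun_prop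
  have hgz := pdy_smooth hgab
  rw [two B hB, gse_pdy_comp hg ha hb, gse_pdy_add (by fun_prop) (by fun_prop), gse_pdy_mul hgab hay,
    gse_pdy_mul hgab' hby, gse_pdy_comp hgy ha hb] at b2
  replace hg := hg.continuous
  replace hh := hh.continuous
  replace ha := ha.continuous
  replace hb := hb.continuous
  replace hgx := hgx.continuous
  replace hgxy := hgxy.continuous
  replace hby := hby.continuous
  replace hbyy := hbyy.continuous
  replace hAy := hAy.continuous
  replace hAyy := hAyy.continuous
  replace hBy := hBy.continuous
  replace hByy := hByy.continuous
  replace hhy := hhy.continuous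
  replace hgz := hgz.continuous
  refine ⟨fun p => pdy B (p.1, h p) - pdx g (a p, b p) * pdy A (p.1, h p), fun p => pdy A (p.1, h p),
    fun p => pdy (pdy B) (p.1, h p) * pdy h p - pdy (fun p => pdx g (a p, b p)) p * pdy A (p.1, h p)
      - pdx g (a p, b p) * pdy (pdy A) (p.1, h p) * pdy h p
      - pdx (pdy g) (a p, b p) * pdy A (p.1, h p) * pdy b p,
    fun p => pdy B (p.1, h p) - pdx g (a p, b p) * pdy A (p.1, h p), fun p => - pdy (pdy b) p,
    by fun_prop, by fun_prop, by fun_prop, by fun_prop, by fun_prop, ?_⟩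
  filter_upwards [a1, a2, b1, b2] with p c1 c2 d1 d2
  refine ⟨c1, ?_, ?_⟩
  · rw [c1] at d1
    linear_combination d1
  · rw [c1, c2] at d2
    linear_combination d2

lemma gse_bdd {F : ℝ × ℝ → ℝ} (hF : Continuous F) {γ : ℝ → ℝ × ℝ} (hγ : Continuous γ) {z : ℝ → ℝ}
    {k : ℕ} (h : z =O[𝓝 0] fun τ : ℝ => τ ^ k) : (fun τ => F (γ τ) * z τ) =O[𝓝 0] fun τ : ℝ => τ ^ k := by
  have h1 : (fun τ => F (γ τ)) =O[𝓝 0] fun _ : ℝ => (1 : ℝ) :=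
    ((hF.comp hγ).tendsto 0).isBigO_one ℝ
  simpa using h1.mul h

lemma gse_div {F : ℝ × ℝ → ℝ} (hF : Continuous F) {γ : ℝ → ℝ × ℝ} (hγ : Continuous γ) (h0 : F (γ 0) ≠ 0)
    {z : ℝ → ℝ} {k : ℕ} (h : (fun τ => z τ * F (γ τ)) =O[𝓝 0] fun τ : ℝ => τ ^ k) :
    z =O[𝓝 0] fun τ : ℝ => τ ^ k := by
  have hc : Tendsto (fun τ => F (γ τ)) (𝓝 0) (𝓝 (F (γ 0))) := (hF.comp hγ).tendsto 0
  have h1 : (fun τ => (F (γ τ))⁻¹) =O[𝓝 0] fun _ : ℝ => (1 : ℝ) := (hc.inv₀ h0).isBigO_one ℝ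
  have h2 := h.mul h1
  simp only [mul_one] at h2
  refine h2.congr' ?_ EventuallyEq.rfl
  filter_upwards [hc.eventually_ne h0] with τ hτ
  field_simp

lemma gse_inv_of {g h : ℝ × ℝ → ℝ} (hg : ContDiff ℝ (⊤ : ℕ∞) g) (hh : ContDiff ℝ (⊤ : ℕ∞) h)
    (g0 : g 0 = 0) (hy0 : pdy h 0 = 0) (he : AEquiv (fun p => (p.1, g p)) (fun p => (p.1, h p)))
    {k : ℕ} (hi : GInv h k) : GInv g k := by
  obtain ⟨φ, ψ, hφ, hψ, hrel⟩ := (aequiv_iff _ _).1 he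
  obtain ⟨θ, hθ, -, hθ2⟩ := hψ.inv
  have hft : Tendsto (fun p : ℝ × ℝ => (p.1, g p)) (𝓝 0) (𝓝 0) := by
    have hgc := hg.continuous
    have := (by fun_prop : Continuous (fun p : ℝ × ℝ => (p.1, g p))).tendsto 0
    simp [g0] at this
    exact this
  have hrel' : ∀ᶠ p in 𝓝 (0 : ℝ × ℝ), ((φ p).1, g (φ p)) = θ (p.1, h p) := by
    filter_upwards [hrel, hφ.tendsto.eventually (hft.eventually hθ2)] with p h1 h2
    rw [← h1, h2]
  have hφ1 := hφ.1
  have hθ1 := hθ.1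
  obtain ⟨K, J, L1, L2, L3, hK, hJ, hL1, hL2, hL3, hev⟩ := gse_rel (A := fun q => (θ q).1) (B := fun q => (θ q).2)
    (a := fun p => (φ p).1) (b := fun p => (φ p).2) hg hh (by fun_prop) (by fun_prop) (by fun_prop) (by fun_prop)
    (hrel'.mono fun p hp => (Prod.ext_iff.1 hp).1) (hrel'.mono fun p hp => (Prod.ext_iff.1 hp).2)
  obtain ⟨γ, hγ, γ0, γ1, o1, o2⟩ := hi
  have hinj : ∀ v, fderiv ℝ φ 0 v = 0 → v = 0 := by
    intro v hv
    exact hφ.2.2.1 (by rw [hv, map_zero])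
  have hbs : ContDiff ℝ (⊤ : ℕ∞) (fun p => (φ p).2) := by fun_prop
  have has : ContDiff ℝ (⊤ : ℕ∞) (fun p => (φ p).1) := by fun_prop
  have hb0 : pdy (fun p => (φ p).2) 0 ≠ 0 := by
    intro hb
    have ha := hev.self_of_nhds.1
    rw [hy0, mul_zero] at ha
    have d1 := (gse_hasFDerivAt has 0).prodMk (gse_hasFDerivAt hbs 0)
    have d2 : fderiv ℝ φ 0 = _ := HasFDerivAt.fderiv (f := φ) d1
    have := hinj (0, 1) (by rw [d2]; exact Prod.ext ha hb)
    simp at this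
  have hγc := hγ.continuous
  have hγt : Tendsto γ (𝓝 0) (𝓝 0) := by simpa [γ0] using hγc.tendsto 0
  have hevγ := hγt.eventually hev
  have hbc := (pdy_smooth hbs).continuous
  have r1 : (fun τ => pdy g (φ (γ τ))) =O[𝓝 0] fun τ : ℝ => τ ^ k := by
    refine gse_div hbc hγc (by rw [γ0]; exact hb0) ?_
    refine (gse_bdd hK hγc o1).congr' ?_ EventuallyEq.rfl
    filter_upwards [hevγ] with τ hτ
    exact hτ.2.1.symm
  refine ⟨fun τ => φ (γ τ), by fun_prop, by simp [γ0, hφ.2.1], ?_, r1, ?_⟩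
  · intro h0
    apply γ1
    apply hinj
    have := HasFDerivAt.comp_hasDerivAt_of_eq (0:ℝ) (hφ1.differentiable gse_htop 0).hasFDerivAt
      (hγ.differentiable gse_htop 0).hasDerivAt γ0.symm
    rw [← this.deriv]; exact h0
  · refine gse_div (F := fun p => pdy (fun p => (φ p).2) p ^ 2) (by fun_prop) hγc (by rw [γ0]; exact pow_ne_zero 2 hb0) ?_
    refine (((gse_bdd hL1 hγc o1).add (gse_bdd hL2 hγc o2)).add (gse_bdd hL3 hγc r1)).congr' ?_ EventuallyEq.rfl
    filter_upwards [hevγ] with τ hτ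
    exact hτ.2.2.symm

end
end

section
open Filter Topology
noncomputable section

lemma gse_deriv_zero {f : ℝ → ℝ} {d : ℝ} (hd : HasDerivAt f d 0) {k : ℕ} (hk : 2 ≤ k)
    (h : f =O[𝓝 0] fun x : ℝ => x ^ k) : d = 0 := by
  have h1 : f =O[𝓝 0] fun x : ℝ => ‖x - 0‖ ^ k := by
    refine h.trans (Asymptotics.IsBigO.of_bound 1 (Eventually.of_forall fun x => ?_))
    simp
  have h2 := (h1.hasFDerivAt (𝕜 := ℝ) (by omega)).hasDerivAt
  simpa using hd.unique h2

structure GGood (g : ℝ × ℝ → ℝ) : Prop where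
  sm : ContDiff ℝ (⊤ : ℕ∞) g
  z0 : g 0 = 0
  z1 : pdy g 0 = 0
  z2 : pdy (pdy g) 0 = 0
  z3 : pdy (pdy (pdy g)) 0 = 6
  zx : pdx (pdy (pdy g)) 0 = 0

lemma gse_graph {g : ℝ × ℝ → ℝ} (G : GGood g) {k : ℕ} (hk : 2 ≤ k) (h : GInv g k) :
    ∃ Y : ℝ → ℝ, ContDiff ℝ (⊤ : ℕ∞) Y ∧ Y 0 = 0 ∧
      (fun x => pdy g (x, Y x)) =O[𝓝 0] (fun x : ℝ => x ^ k) ∧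
      (fun x => pdy (pdy g) (x, Y x)) =O[𝓝 0] (fun x : ℝ => x ^ k) := by
  obtain ⟨δ, hδ, δ0, δ1, o1, o2⟩ := h
  have hX : ContDiff ℝ (⊤ : ℕ∞) (fun τ => (δ τ).1) := by fun_prop
  have hY : ContDiff ℝ (⊤ : ℕ∞) (fun τ => (δ τ).2) := by fun_prop
  have dX := (hX.differentiable gse_htop 0).hasDerivAt
  have dY := (hY.differentiable gse_htop 0).hasDerivAt
  have dδ : HasDerivAt δ _ 0 := dX.prodMk dY
  have hyy := pdy_smooth (pdy_smooth G.sm)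
  have d2 := HasFDerivAt.comp_hasDerivAt_of_eq (0:ℝ) (gse_hasFDerivAt hyy 0) dδ δ0.symm
  have d3 := gse_deriv_zero d2 hk o2
  rw [gse_fderiv_apply, G.zx, G.z3] at d3
  have d4 : deriv (fun τ => (δ τ).2) 0 = 0 := by simpa using d3
  have d5 : deriv (fun τ => (δ τ).1) 0 ≠ 0 := by
    intro h0
    apply δ1
    rw [dδ.deriv, h0, d4]; rfl
  obtain ⟨θ, hθ, θ0, hθ1, -, -⟩ := gse_inv (fun τ => (δ τ).1) 0 hX (by
    have : (fderiv ℝ (fun τ => (δ τ).1) 0 : ℝ → ℝ) = fun v => v * deriv (fun τ => (δ τ).1) 0 := by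
      funext v
      rw [dX.hasFDerivAt.fderiv]; simp
    rw [this]
    exact ⟨fun u v huv => mul_right_cancel₀ d5 huv, fun v => ⟨v / deriv (fun τ => (δ τ).1) 0, by field_simp⟩⟩)
  simp only [δ0, Prod.fst_zero] at θ0 hθ1
  have ht : Tendsto θ (𝓝 0) (𝓝 0) := by simpa [θ0] using hθ.continuous.tendsto 0
  have hO : θ =O[𝓝 0] fun x : ℝ => x := by
    have := (hθ.differentiable gse_htop 0).isBigO_sub
    simpa [θ0] using this
  have hev : ∀ᶠ x in 𝓝 (0:ℝ), δ (θ x) = (x, (δ (θ x)).2) := by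
    filter_upwards [hθ1] with x hx
    exact Prod.ext hx rfl
  refine ⟨fun x => (δ (θ x)).2, by fun_prop, by simp [θ0, δ0], ?_, ?_⟩
  · refine ((o1.comp_tendsto ht).trans (hO.pow k)).congr' ?_ EventuallyEq.rfl
    filter_upwards [hev] with x hx
    exact congrArg (pdy g) hx
  · refine ((o2.comp_tendsto ht).trans (hO.pow k)).congr' ?_ EventuallyEq.rfl
    filter_upwards [hev] with x hx
    exact congrArg (pdy (pdy g)) hx

lemma gse_shift {F : ℝ × ℝ → ℝ} (hF : ContDiff ℝ (⊤ : ℕ∞) F) {y : ℝ → ℝ} (hy : ContDiff ℝ (⊤ : ℕ∞) y) :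
    ∃ R : ℝ × ℝ → ℝ, ContDiff ℝ (⊤ : ℕ∞) R ∧ (∀ x z, F (x, y x + z) = F (x, y x) + z * R (x, z)) ∧
      R (0, 0) = pdy F (0, y 0) := by
  have hK : ContDiff ℝ (⊤ : ℕ∞) (fun p : ℝ × ℝ => F (p.1, y p.1 + p.2)) := by fun_prop
  obtain ⟨R, hR, he⟩ := gse_taylor 1 _ hK
  have he' : ∀ x z, F (x, y x + z) = F (x, y x) + z * R (x, z) := by
    intro x z
    simpa using he x z
  refine ⟨R, hR, he', ?_⟩
  have h1 := gse_deriv_y hF 0 (y 0) 0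
  have h2 : HasDerivAt (fun z => F (0, y 0 + z)) (R (0, 0)) 0 := by
    have := ((hasDerivAt_id (0:ℝ)).mul (gse_hasDerivAt_y hR 0 0)).const_add (F (0, y 0))
    have e : (fun z => F (0, y 0 + z)) = fun z => F (0, y 0) + z * R (0, z) := funext fun z => he' 0 z
    rw [e]
    refine this.congr_deriv (by simp)
  simpa using h2.unique h1

lemma gse_curve {g : ℝ × ℝ → ℝ} (G : GGood g) : ∃ y : ℝ → ℝ, ContDiff ℝ (⊤ : ℕ∞) y ∧ y 0 = 0 ∧
    ∀ᶠ x in 𝓝 0, pdy (pdy g) (x, y x) = 0 := by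
  have hyy := pdy_smooth (pdy_smooth G.sm)
  refine gse_implicit (pdy (pdy g)) 0 hyy G.z2 fun v hv => ?_
  rw [gse_fderiv_apply, show ((0:ℝ), (0:ℝ)) = 0 from rfl, G.z3] at hv
  simpa using hv

lemma gse_char {g : ℝ × ℝ → ℝ} (G : GGood g) {y : ℝ → ℝ} (hy : ContDiff ℝ (⊤ : ℕ∞) y) (y0 : y 0 = 0)
    (hev : ∀ᶠ x in 𝓝 0, pdy (pdy g) (x, y x) = 0) {k : ℕ} (hk : 2 ≤ k) :
    GInv g k ↔ (fun x => pdy g (x, y x)) =O[𝓝 0] (fun x : ℝ => x ^ k) := by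
  have hgy := pdy_smooth G.sm
  have hgyy := pdy_smooth hgy
  constructor
  · intro h
    obtain ⟨Y, hY, Y0, o1, o2⟩ := gse_graph G hk h
    obtain ⟨R, hR, e1, R0⟩ := gse_shift hgyy hy
    obtain ⟨S, hS, e2, -⟩ := gse_shift hgy hy
    have hc : Continuous (fun x => (x, Y x - y x)) := by
      have := hY.continuous
      have := hy.continuous
      fun_prop
    have hz : (fun x => Y x - y x) =O[𝓝 0] fun x : ℝ => x ^ k := by
      refine gse_div hR.continuous hc ?_ ?_
      · simp only [Y0, y0, sub_zero]
        rw [R0, y0, show ((0:ℝ), (0:ℝ)) = 0 from rfl, G.z3]; norm_num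
      · refine o2.congr' ?_ EventuallyEq.rfl
        filter_upwards [hev] with x hx
        have := e1 x (Y x - y x)
        rw [hx, add_sub_cancel, zero_add] at this
        exact this
    have := o1.sub (gse_bdd hS.continuous hc hz)
    refine this.congr_left fun x => ?_
    have := e2 x (Y x - y x)
    rw [add_sub_cancel] at this
    rw [this]; ring
  · intro h
    refine ⟨fun x => (x, y x), by fun_prop, by simp [y0], ?_, h, ?_⟩
    · have := (hasDerivAt_id (0:ℝ)).prodMk (hy.differentiable gse_htop 0).hasDerivAt
      have h2 : HasDerivAt (fun x => (x, y x)) _ 0 := this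
      rw [h2.deriv]
      simp
    · refine (Asymptotics.isBigO_zero (fun x : ℝ => x ^ k) (𝓝 0)).congr' ?_ EventuallyEq.rfl
      filter_upwards [hev] with x hx
      exact hx.symm

end
end

section
open Filter Topology
noncomputable section

/-- one-variable Taylor along the x-axis -/
lemma gse_tx1 {G : ℝ × ℝ → ℝ} (hG : ContDiff ℝ (⊤ : ℕ∞) G) (n : ℕ) :
    ∃ r : ℝ → ℝ, ContDiff ℝ (⊤ : ℕ∞) r ∧ ∀ x,
      G (x, 0) = ∑ i ∈ Finset.range n, x ^ i / (i.factorial : ℝ) * (pdx^[i] G) 0 + x ^ n * r x := by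
  have hH : ContDiff ℝ (⊤ : ℕ∞) (fun p : ℝ × ℝ => G (p.2, 0)) := by fun_prop
  obtain ⟨R, hR, he⟩ := gse_taylor n _ hH
  have key : ∀ i, ContDiff ℝ (⊤ : ℕ∞) (pdx^[i] G) ∧
      pdy^[i] (fun p : ℝ × ℝ => G (p.2, 0)) = fun p => (pdx^[i] G) (p.2, 0) := by
    intro i
    induction i with
    | zero => exact ⟨hG, rfl⟩
    | succ i ih =>
      obtain ⟨h1, h2⟩ := ih
      rw [Function.iterate_succ_apply', Function.iterate_succ_apply']
      refine ⟨pdx_smooth h1, ?_⟩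
      rw [h2]
      funext ⟨x, y⟩
      have hs : ContDiff ℝ (⊤ : ℕ∞) (fun p : ℝ × ℝ => (pdx^[i] G) (p.2, 0)) := by fun_prop
      exact (gse_hasDerivAt_y hs x y).unique (gse_hasDerivAt_x h1 y 0)
  refine ⟨fun x => R (0, x), by fun_prop, fun x => ?_⟩
  have := he 0 x
  simp only [(key _).2] at this
  exact this

lemma gse_tx {g : ℝ × ℝ → ℝ} (hg : ContDiff ℝ (⊤ : ℕ∞) g) (n j : ℕ) :
    ∃ r : ℝ → ℝ, ContDiff ℝ (⊤ : ℕ∞) r ∧ ∀ x,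
      (pdy^[j] g) (x, 0) = ∑ i ∈ Finset.range n, x ^ i * ((j.factorial : ℝ) * tcoeff g i j) + x ^ n * r x := by
  obtain ⟨r, hr, he⟩ := gse_tx1 (pdy_iter_smooth hg j) n
  refine ⟨r, hr, fun x => ?_⟩
  rw [he]
  congr 1
  refine Finset.sum_congr rfl fun i _ => ?_
  have h1 : (i.factorial : ℝ) ≠ 0 := by exact_mod_cast i.factorial_ne_zero
  have h2 : (j.factorial : ℝ) ≠ 0 := by exact_mod_cast j.factorial_ne_zero
  unfold tcoeff
  field_simp

lemma gse_lead {u : ℝ → ℝ} (hu : Continuous u) (k : ℕ)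
    (h : (fun x => x ^ k * u x) =O[𝓝 0] fun x : ℝ => x ^ (k + 1)) : u 0 = 0 := by
  induction k with
  | zero =>
    obtain ⟨C, hC⟩ := h.bound
    have := hC.self_of_nhds
    simpa using this
  | succ k ih =>
    apply ih
    refine gse_cancel (by fun_prop) (h.congr_left fun x => ?_)
    ring

lemma gse_lead_iff {c : ℝ} {u : ℝ → ℝ} (hu : Continuous u) (k : ℕ) :
    ((fun x => x ^ k * (c + x * u x)) =O[𝓝 0] fun x : ℝ => x ^ (k + 1)) ↔ c = 0 := by
  constructor
  · intro h
    have := gse_lead (u := fun x => c + x * u x) (by fun_prop) k h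
    simpa using this
  · intro h
    have h1 : u =O[𝓝 0] fun _ : ℝ => (1 : ℝ) := (hu.tendsto 0).isBigO_one ℝ
    have := (Asymptotics.isBigO_refl (fun x : ℝ => x ^ (k + 1)) (𝓝 0)).mul h1
    simp only [mul_one] at this
    refine this.congr_left fun x => ?_
    rw [h]; ring

/-- expansion of the invariant -/
lemma gse_expand {g : ℝ × ℝ → ℝ} (G : GGood g)
    (hP : ∀ i j, i + j < 4 → tcoeff g i j = if (i, j) = (0, 3) then 1 else 0)
    {y : ℝ → ℝ} (hy : ContDiff ℝ (⊤ : ℕ∞) y) (y0 : y 0 = 0)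
    (hev : ∀ᶠ x in 𝓝 0, pdy (pdy g) (x, y x) = 0) :
    ∃ s : ℝ → ℝ, Continuous s ∧ ∀ᶠ x in 𝓝 0, pdy g (x, y x) = x ^ 3 * (tcoeff g 3 1 + x *
      ((tcoeff g 4 1 - 1 / 3 * tcoeff g 2 2 ^ 2) + x *
        ((tcoeff g 5 1 - 2 / 3 * tcoeff g 3 2 * tcoeff g 2 2 +
          1 / 3 * tcoeff g 1 3 * tcoeff g 2 2 ^ 2) + x * s x))) := by
  have hgy := pdy_smooth G.sm
  have hgyy := pdy_smooth hgy
  obtain ⟨r1, hr1, e1⟩ := gse_tx G.sm 6 1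
  obtain ⟨r2, hr2, e2⟩ := gse_tx G.sm 4 2
  obtain ⟨r3, hr3, e3⟩ := gse_tx G.sm 2 3
  have t01 := hP 0 1 (by norm_num)
  have t11 := hP 1 1 (by norm_num)
  have t21 := hP 2 1 (by norm_num)
  have t02 := hP 0 2 (by norm_num)
  have t12 := hP 1 2 (by norm_num)
  have t03 := hP 0 3 (by norm_num)
  simp at t01 t11 t21 t02 t12 t03
  simp [Finset.sum_range_succ, t01, t11, t21, t02, t12, t03, Nat.factorial] at e1 e2 e3
  obtain ⟨R1, hR1, f1⟩ := gse_taylor 3 _ hgy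
  obtain ⟨R2, hR2, f2⟩ := gse_taylor 2 _ hgyy
  simp [Finset.sum_range_succ] at f1 f2
  -- y vanishes to second order
  have dy := (hy.differentiable gse_htop 0).hasDerivAt
  have hdy : deriv y 0 = 0 := by
    have h1 := HasFDerivAt.comp_hasDerivAt_of_eq (0:ℝ) (gse_hasFDerivAt hgyy 0)
      ((hasDerivAt_id (0:ℝ)).prodMk dy) (by simp only [id, y0]; rfl)
    have h2 : ((pdy (pdy g)) ∘ fun x => (id x, y x)) =O[𝓝 0] fun x : ℝ => x ^ 2 := by
      refine (Asymptotics.isBigO_zero (fun x : ℝ => x ^ 2) (𝓝 0)).congr' ?_ EventuallyEq.rfl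
      filter_upwards [hev] with x hx
      exact hx.symm
    have h3 := gse_deriv_zero h1 le_rfl h2
    rw [gse_fderiv_apply, G.zx, G.z3] at h3
    simpa using h3
  obtain ⟨Y1, hY1, k1⟩ := gse_tx1 (G := fun p => y p.1) (by fun_prop) 2
  have kx : pdx (fun p : ℝ × ℝ => y p.1) 0 = 0 := by
    have hs : ContDiff ℝ (⊤ : ℕ∞) (fun p : ℝ × ℝ => y p.1) := by fun_prop
    have := (gse_hasDerivAt_x hs 0 0).unique dy
    rw [hdy] at this; exact this
  simp [Finset.sum_range_succ, y0, kx] at k1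
  obtain ⟨Y2, hY2, k2⟩ := gse_tx1 (G := fun p => Y1 p.1) (by fun_prop) 2
  simp [Finset.sum_range_succ] at k2
  generalize Y1 0 = α at k2
  generalize pdx (fun p : ℝ × ℝ => Y1 p.1) 0 = β at k2
  generalize tcoeff g 3 1 = a31 at *
  generalize tcoeff g 4 1 = a41 at *
  generalize tcoeff g 5 1 = a51 at *
  generalize tcoeff g 2 2 = a22 at *
  generalize tcoeff g 3 2 = a32 at *
  generalize tcoeff g 1 3 = a13 at *
  replace hr1 := hr1.continuous
  replace hr2 := hr2.continuous
  replace hr3 := hr3.continuous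
  replace hR1 := hR1.continuous
  replace hR2 := hR2.continuous
  replace hY1 := hY1.continuous
  replace hY2 := hY2.continuous
  replace hy := hy.continuous
  let T : ℝ → ℝ := fun x => r2 x + 6 * Y2 x + 6 * a13 * β + 6 * a13 * x * Y2 x + Y1 x * r3 x
    + Y1 x ^ 2 * R2 (x, y x)
  have hT : Continuous T := by fun_prop
  have rel : ∀ᶠ x in 𝓝 (0:ℝ), (0:ℝ) = x ^ 2 * ((2 * a22 + 6 * α) + x * ((2 * a32 + 6 * β + 6 * a13 * α) + x * T x)) := by
    filter_upwards [hev] with x hx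
    rw [f2, e2, e3, k1] at hx
    rw [← hx]
    simp only [T, k1]
    rw [k2]
    ring
  have hα : 2 * a22 + 6 * α = 0 := by
    rw [← gse_lead_iff (u := fun x => (2 * a32 + 6 * β + 6 * a13 * α) + x * T x) (by fun_prop) 2]
    exact (Asymptotics.isBigO_zero (fun x : ℝ => x ^ 3) (𝓝 0)).congr' rel EventuallyEq.rfl
  have hβ : 2 * a32 + 6 * β + 6 * a13 * α = 0 := by
    rw [← gse_lead_iff (u := T) (by fun_prop) 3]
    refine (Asymptotics.isBigO_zero (fun x : ℝ => x ^ 4) (𝓝 0)).congr' ?_ EventuallyEq.rfl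
    filter_upwards [rel] with x hx
    rw [hα] at hx
    refine hx.trans ?_
    ring
  have hα' : α = - a22 / 3 := by linarith
  have hβ' : β = - a32 / 3 + a13 * a22 / 3 := by rw [hα'] at hβ; linarith
  refine ⟨fun x => r1 x + Y1 x * r2 x + Y1 x ^ 2 * r3 x / 2 + Y1 x ^ 3 * R1 (x, y x)
    + Y2 x * (2 * a22 + 2 * a32 * x) + 2 * a32 * β
    + 3 * ((β ^ 2 + 2 * α * Y2 x + 2 * β * x * Y2 x + x ^ 2 * Y2 x ^ 2) * (1 + a13 * x) + 2 * α * β * a13),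
    by fun_prop, Eventually.of_forall fun x => ?_⟩
  rw [f1, e1, e2, e3]
  simp only [k1]
  rw [k2]
  rw [hα', hβ']
  ring

end
end

section
open Filter Topology
noncomputable section

lemma gse_model_pd {a : ℝ → ℝ} (ha : ContDiff ℝ (⊤ : ℕ∞) a) :
    pdy (fun p : ℝ × ℝ => p.2 ^ 3 + a p.1 * p.2) = (fun p => 3 * p.2 ^ 2 + a p.1) ∧
    pdy (pdy (fun p : ℝ × ℝ => p.2 ^ 3 + a p.1 * p.2)) = (fun p => 6 * p.2) ∧
    pdy (pdy (pdy (fun p : ℝ × ℝ => p.2 ^ 3 + a p.1 * p.2))) = (fun _ => 6) ∧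
    pdx (pdy (pdy (fun p : ℝ × ℝ => p.2 ^ 3 + a p.1 * p.2))) = (fun _ => 0) := by
  have h1 : pdy (fun p : ℝ × ℝ => p.2 ^ 3 + a p.1 * p.2) = (fun p => 3 * p.2 ^ 2 + a p.1) := by
    funext ⟨x, y⟩
    have hs : ContDiff ℝ (⊤ : ℕ∞) (fun p : ℝ × ℝ => p.2 ^ 3 + a p.1 * p.2) := by fun_prop
    refine (gse_hasDerivAt_y hs x y).unique (((hasDerivAt_pow 3 y).add
      ((hasDerivAt_id y).const_mul (a x))).congr_deriv ?_)
    simp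
  have h2 : pdy (fun p : ℝ × ℝ => 3 * p.2 ^ 2 + a p.1) = (fun p => 6 * p.2) := by
    funext ⟨x, y⟩
    have hs : ContDiff ℝ (⊤ : ℕ∞) (fun p : ℝ × ℝ => 3 * p.2 ^ 2 + a p.1) := by fun_prop
    refine (gse_hasDerivAt_y hs x y).unique ((((hasDerivAt_pow 2 y).const_mul 3).add_const (a x)).congr_deriv ?_)
    simp; ring
  have h3 : pdy (fun p : ℝ × ℝ => 6 * p.2) = (fun _ => 6) := by
    funext ⟨x, y⟩
    have hs : ContDiff ℝ (⊤ : ℕ∞) (fun p : ℝ × ℝ => 6 * p.2) := by fun_prop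
    refine (gse_hasDerivAt_y hs x y).unique (((hasDerivAt_id y).const_mul 6).congr_deriv ?_)
    simp
  have h4 : pdx (fun p : ℝ × ℝ => 6 * p.2) = (fun _ => 0) := by
    funext ⟨x, y⟩
    have hs : ContDiff ℝ (⊤ : ℕ∞) (fun p : ℝ × ℝ => 6 * p.2) := by fun_prop
    exact (gse_hasDerivAt_x hs x y).unique (hasDerivAt_const x (6 * y))
  rw [h1, h2, h3, h4]
  simp

lemma gse_model_good {a : ℝ → ℝ} (ha : ContDiff ℝ (⊤ : ℕ∞) a) (a0 : a 0 = 0) :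
    GGood (fun p : ℝ × ℝ => p.2 ^ 3 + a p.1 * p.2) := by
  obtain ⟨h1, h2, h3, h4⟩ := gse_model_pd ha
  exact ⟨by fun_prop, by simp, by rw [h1]; simp [a0], by rw [h2]; simp, by rw [h3], by rw [h4]⟩

lemma gse_model_char {a : ℝ → ℝ} (ha : ContDiff ℝ (⊤ : ℕ∞) a) (a0 : a 0 = 0) {k : ℕ} (hk : 2 ≤ k) :
    GInv (fun p : ℝ × ℝ => p.2 ^ 3 + a p.1 * p.2) k ↔ a =O[𝓝 0] (fun x : ℝ => x ^ k) := by
  obtain ⟨h1, h2, h3, h4⟩ := gse_model_pd ha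
  rw [gse_char (gse_model_good ha a0) (y := fun _ => 0) contDiff_const rfl (by rw [h2]; simp) hk, h1]
  simp

lemma gse_inv_iff {g h : ℝ × ℝ → ℝ} (hg : GGood g) (hh : GGood h)
    (he : AEquiv (fun p => (p.1, g p)) (fun p => (p.1, h p))) (k : ℕ) : GInv g k ↔ GInv h k := by
  refine ⟨fun hi => ?_, fun hi => gse_inv_of hg.sm hh.sm hg.z0 hh.z1 he hi⟩
  refine gse_inv_of hh.sm hg.sm hh.z0 hg.z1 (AEquiv.symm' ?_ he) hi
  have hgc := hg.sm.continuous
  have := (by fun_prop : Continuous (fun p : ℝ × ℝ => (p.1, g p))).tendsto 0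
  simp [hg.z0] at this
  exact this

lemma gse_fwd {g : ℝ × ℝ → ℝ} (hg : GGood g) {k : ℕ} (hk : 2 ≤ k) (h1 : GInv g k) (h2 : ¬ GInv g (k + 1)) :
    ∃ u0 : ℝ, u0 ≠ 0 ∧ ∀ ε v0 : ℝ, ε ≠ 0 → v0 ≠ 0 → ε * v0 ^ k = u0 →
      AEquiv (fun p => (p.1, g p)) (fun p => (p.1, p.2 ^ 3 + ε * p.1 ^ k * p.2)) := by
  obtain ⟨a, ha, a0, he⟩ := gse_prep hg.sm hg.z0 hg.z1 hg.z2 hg.z3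
  have hm := gse_model_good ha a0
  rw [gse_inv_iff hg hm he, gse_model_char ha a0 hk] at h1
  rw [gse_inv_iff hg hm he, gse_model_char ha a0 (by omega)] at h2
  obtain ⟨u, hu, hau⟩ := gse_factor k a ha h1
  refine ⟨u 0, ?_, ?_⟩
  · intro hu0
    apply h2
    obtain ⟨r, hr, hre⟩ := gse_tx1 (G := fun p => u p.1) (by fun_prop) 1
    simp [hu0] at hre
    have := (gse_lead_iff (c := 0) hr.continuous k).2 rfl
    refine this.congr_left fun x => ?_
    rw [hau, hre]; ring
  · intro ε v0 hε hv0 hh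
    have := gse_normal hu (by omega) hε hv0 hh
    have e : (fun p : ℝ × ℝ => (p.1, p.2 ^ 3 + a p.1 * p.2)) =
        fun p => (p.1, p.2 ^ 3 + (p.1 ^ k * u p.1) * p.2) := by
      funext p; rw [hau]
    rw [e] at he
    exact he.trans' this

lemma gse_bwd {g : ℝ × ℝ → ℝ} (hg : GGood g) {k : ℕ} (hk : 2 ≤ k) {ε : ℝ} (hε : ε ≠ 0)
    (he : AEquiv (fun p => (p.1, g p)) (fun p => (p.1, p.2 ^ 3 + ε * p.1 ^ k * p.2))) :
    GInv g k ∧ ¬ GInv g (k + 1) := by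
  have ha : ContDiff ℝ (⊤ : ℕ∞) (fun x : ℝ => ε * x ^ k) := by fun_prop
  have a0 : (fun x : ℝ => ε * x ^ k) 0 = 0 := by
    have : k ≠ 0 := by omega
    simp [this]
  have hm := gse_model_good ha a0
  rw [gse_inv_iff hg hm he, gse_inv_iff hg hm he, gse_model_char ha a0 hk, gse_model_char ha a0 (by omega)]
  refine ⟨(Asymptotics.isBigO_refl _ _).const_mul_left ε, fun h => hε ?_⟩
  rw [← gse_lead_iff (u := fun _ => 0) continuous_const k]
  refine h.congr_left fun x => ?_
  ring

lemma gse_root {k : ℕ} (hk : k ≠ 0) {u : ℝ} (hu : 0 < u) : ∃ v : ℝ, 0 < v ∧ v ^ k = u :=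
  ⟨u ^ ((k : ℝ)⁻¹), by positivity, Real.rpow_inv_natCast_pow hu.le hk⟩

lemma gse_iff_eps {g : ℝ × ℝ → ℝ} (hg : GGood g) {k : ℕ} (hk : 2 ≤ k) :
    (GInv g k ∧ ¬ GInv g (k + 1)) ↔ ∃ ε : ℝ, (ε = 1 ∨ ε = -1) ∧
      AEquiv (fun p => (p.1, g p)) (fun p => (p.1, p.2 ^ 3 + ε * p.1 ^ k * p.2)) := by
  constructor
  · rintro ⟨h1, h2⟩
    obtain ⟨u0, hu0, H⟩ := gse_fwd hg hk h1 h2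
    rcases lt_or_gt_of_ne hu0 with h | h
    · obtain ⟨v, hv, hvk⟩ := gse_root (k := k) (by omega) (neg_pos.2 h)
      exact ⟨-1, Or.inr rfl, H _ v (by norm_num) hv.ne' (by rw [hvk]; ring)⟩
    · obtain ⟨v, hv, hvk⟩ := gse_root (k := k) (by omega) h
      exact ⟨1, Or.inl rfl, H _ v (by norm_num) hv.ne' (by rw [hvk]; ring)⟩
  · rintro ⟨ε, hε, h⟩
    refine gse_bwd hg hk ?_ h
    rcases hε with h | h <;> rw [h] <;> norm_num

lemma gse_iff_three {g : ℝ × ℝ → ℝ} (hg : GGood g) :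
    (GInv g 3 ∧ ¬ GInv g 4) ↔
      AEquiv (fun p => (p.1, g p)) (fun p => (p.1, p.2 ^ 3 + p.1 ^ 3 * p.2)) := by
  have e : (fun p : ℝ × ℝ => (p.1, p.2 ^ 3 + p.1 ^ 3 * p.2)) =
      fun p => (p.1, p.2 ^ 3 + 1 * p.1 ^ 3 * p.2) := by
    funext p; rw [one_mul]
  rw [e]
  constructor
  · rintro ⟨h1, h2⟩
    obtain ⟨u0, hu0, H⟩ := gse_fwd hg (by norm_num) h1 h2
    rcases lt_or_gt_of_ne hu0 with h | h
    · obtain ⟨v, hv, hvk⟩ := gse_root (k := 3) (by omega) (neg_pos.2 h)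
      exact H 1 (-v) (by norm_num) (by simpa using hv.ne') (by linarith [show (-v) ^ 3 = - v ^ 3 by ring])
    · obtain ⟨v, hv, hvk⟩ := gse_root (k := 3) (by omega) h
      exact H 1 v (by norm_num) hv.ne' (by rw [hvk]; ring)
  · intro h
    exact gse_bwd hg (by norm_num) one_ne_zero h

lemma gse_main (g : ℝ × ℝ → ℝ) (G : GGood g)
    (hP : ∀ i j, i + j < 4 → tcoeff g i j = if (i, j) = (0, 3) then 1 else 0) :
    GInv g 3 ∧ (GInv g 4 ↔ tcoeff g 3 1 = 0) ∧
    (GInv g 5 ↔ tcoeff g 3 1 = 0 ∧ tcoeff g 4 1 - 1 / 3 * tcoeff g 2 2 ^ 2 = 0) ∧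
    (GInv g 6 ↔ tcoeff g 3 1 = 0 ∧ tcoeff g 4 1 - 1 / 3 * tcoeff g 2 2 ^ 2 = 0 ∧
      tcoeff g 5 1 - 2 / 3 * tcoeff g 3 2 * tcoeff g 2 2 +
          1 / 3 * tcoeff g 1 3 * tcoeff g 2 2 ^ 2 = 0) := by
  obtain ⟨y, hy, y0, hev⟩ := gse_curve G
  obtain ⟨s, hs, hb⟩ := gse_expand G hP hy y0 hev
  have ch : ∀ k, 2 ≤ k → (GInv g k ↔ _) := fun k hk =>
    (gse_char G hy y0 hev hk).trans (Asymptotics.isBigO_congr hb EventuallyEq.rfl)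
  rw [ch 3 (by norm_num), ch 4 (by norm_num), ch 5 (by norm_num), ch 6 (by norm_num)]
  generalize tcoeff g 4 1 - 1 / 3 * tcoeff g 2 2 ^ 2 = c4
  generalize tcoeff g 5 1 - 2 / 3 * tcoeff g 3 2 * tcoeff g 2 2 +
          1 / 3 * tcoeff g 1 3 * tcoeff g 2 2 ^ 2 = c5
  generalize tcoeff g 3 1 = c3
  have mono : ∀ k : ℕ, (fun x : ℝ => x ^ (k + 1)) =O[𝓝 0] fun x : ℝ => x ^ k := by
    intro k
    have h1 : (fun x : ℝ => x) =O[𝓝 0] fun _ : ℝ => (1 : ℝ) := (continuous_id.tendsto (0:ℝ)).isBigO_one ℝ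
    have := (Asymptotics.isBigO_refl (fun x : ℝ => x ^ k) (𝓝 0)).mul h1
    simpa [pow_succ] using this
  have F4 := gse_lead_iff (c := c3) (u := fun x => c4 + x * (c5 + x * s x)) (by fun_prop) 3
  have F5 := gse_lead_iff (c := c4) (u := fun x => c5 + x * s x) (by fun_prop) 4
  have F6 := gse_lead_iff (c := c5) (u := s) hs 5
  have E5 : (fun x => x ^ 3 * (0 + x * (c4 + x * (c5 + x * s x)))) = fun x => x ^ 4 * (c4 + x * (c5 + x * s x)) := by
    funext x; ring
  have E6 : (fun x => x ^ 4 * (0 + x * (c5 + x * s x))) = fun x => x ^ 5 * (c5 + x * s x) := by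
    funext x; ring
  have F5' : ((fun x => x ^ 3 * (c3 + x * (c4 + x * (c5 + x * s x)))) =O[𝓝 0] fun x : ℝ => x ^ 5) ↔
      c3 = 0 ∧ c4 = 0 := by
    constructor
    · intro h
      have h3 := F4.1 (h.trans (mono 4))
      subst h3
      rw [E5] at h
      exact ⟨rfl, F5.1 h⟩
    · rintro ⟨h3, h4⟩
      rw [h3, E5]
      exact F5.2 h4
  refine ⟨?_, F4, F5', ?_⟩
  · have hc : Continuous (fun x => c3 + x * (c4 + x * (c5 + x * s x))) := by fun_prop
    have h1 := (hc.tendsto 0).isBigO_one ℝ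
    have := (Asymptotics.isBigO_refl (fun x : ℝ => x ^ 3) (𝓝 0)).mul h1
    simpa using this
  · constructor
    · intro h
      obtain ⟨h3, h4⟩ := F5'.1 (h.trans (mono 5))
      subst h3
      subst h4
      rw [E5, E6] at h
      exact ⟨rfl, rfl, F6.1 h⟩
    · rintro ⟨h3, h4, h5⟩
      rw [h3, E5, h4, E6]
      exact F6.2 h5

end
end

theorem stmt15 (f : ℝ × ℝ → ℝ × ℝ) (g : ℝ × ℝ → ℝ) (hf0 : f 0 = 0)
    (hform : HasForm f g 4 (fun i j => if (i, j) = (0, 3) then 1 else 0)) :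
    (tcoeff g 3 1 ≠ 0 ↔
      AEquiv f (fun p => (p.1, p.2 ^ 3 + p.1 ^ 3 * p.2))) ∧
    ((tcoeff g 3 1 = 0 ∧ tcoeff g 4 1 - 1 / 3 * tcoeff g 2 2 ^ 2 ≠ 0) ↔
      ∃ ε : ℝ, (ε = 1 ∨ ε = -1) ∧
        AEquiv f (fun p => (p.1, p.2 ^ 3 + ε * p.1 ^ 4 * p.2))) ∧
    ((tcoeff g 3 1 = 0 ∧ tcoeff g 4 1 - 1 / 3 * tcoeff g 2 2 ^ 2 = 0 ∧
        tcoeff g 5 1 - 2 / 3 * tcoeff g 3 2 * tcoeff g 2 2 +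
          1 / 3 * tcoeff g 1 3 * tcoeff g 2 2 ^ 2 ≠ 0) ↔
      ∃ ε : ℝ, (ε = 1 ∨ ε = -1) ∧
        AEquiv f (fun p => (p.1, p.2 ^ 3 + ε * p.1 ^ 5 * p.2))) := by
  obtain ⟨hg, hfe, hP⟩ := hform
  have hfeq : f = fun p => (p.1, g p) := funext hfe
  have t01 := hP 0 1 (by norm_num)
  have t02 := hP 0 2 (by norm_num)
  have t03 := hP 0 3 (by norm_num)
  have t12 := hP 1 2 (by norm_num)
  have G : GGood g := by
    refine ⟨hg, ?_, ?_, ?_, ?_, ?_⟩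
    · have := hfe 0
      rw [hf0] at this
      exact (Prod.ext_iff.1 this).2.symm
    · simpa [tcoeff] using t01
    · simpa [tcoeff] using t02
    · simp [tcoeff, Nat.factorial] at t03
      linarith
    · simpa [tcoeff] using t12
  obtain ⟨m3, m4, m5, m6⟩ := gse_main g G hP
  rw [hfeq, ← gse_iff_three G, ← gse_iff_eps G (k := 4) (by norm_num), ← gse_iff_eps G (k := 5) (by norm_num),
    m4, m5, m6]
  refine ⟨?_, ?_, ?_⟩ <;> tauto
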